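/- arXiv:2012.08411 — 5 statements merged into one kernel-verified Lean document; each statement's English description precedes it below -/
import Mathlib

section
/- Let T be a linear operator on an N-dimensional vector space over F_q. Suppose a_{0,1} = a_{0,2} = N ≥ a_{1,1} ≥ a_{1,2} ≥ a_{2,1} ≥ a_{2,2} ≥ ⋯ ≥ a_{r,1} ≥ a_{r,2} ≥ 0 = a_{r+1,1} = a_{r+1,2}, and that a_{i−1,1} ≥ 2a_{i,1} − a_{i,2} for 1 ≤ i ≤ r. Let A = {(j_1,…,j_r) : max(a_{i+1,2}, 2a_{i,2} − a_{i,1}) ≤ j_i ≤ a_{i,2} for 1 ≤ i ≤ r} and B = {(k_1,…,k_r) : a_{i,2} ≤ k_i ≤ a_{i,1} for 1 ≤ i ≤ r}. Then |[(a_{1,1},a_{1,2}),…,(a_{r,1},a_{r,2})]_T| = Σ_{(j_1,…,j_r) ∈ A} |[(a_{1,2},j_1),(a_{2,2},j_2),…,(a_{r,2},j_r)]_T| · ∏_{i=1}^{r} [a_{i−1,2} − (2a_{i,2} − j_i) choose a_{i,1} − (2a_{i,2} − j_i)]_q − Σ_{(k_1,…,k_r) ∈ B \ {(a_{1,2},…,a_{r,2})}}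 |[(a_{1,1},k_1),(a_{2,1},k_2),…,(a_{r,1},k_r)]_T| · ∏_{i=1}^{r} [k_i − a_{i+1,1} choose a_{i,2} − a_{i+1,1}]_q. -/
/-- The set `(a,b)_T` of subspaces `W` with `dim W = a` and `dim (W ∩ T⁻¹W) = b`. -/
def pairSet {F V : Type*} [Field F] [AddCommGroup V] [Module F V]
    (T : V →ₗ[F] V) (a b : ℕ) : Set (Submodule F V) :=
  {W | Module.finrank F W = a ∧ Module.finrank F ↥(W ⊓ W.comap T) = b}

/-- The set `[(a₁,₁,a₁,₂),…,(a_r,₁,a_r,₂)]_T`. -/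
def tupleSet {F V : Type*} [Field F] [AddCommGroup V] [Module F V]
    (T : V →ₗ[F] V) (r : ℕ) (a : Fin r → ℕ × ℕ) : Set (Fin r → Submodule F V) :=
  {W | (∀ i, W i ∈ pairSet T (a i).1 (a i).2) ∧
    ∀ (i : Fin r) (h : (i : ℕ) + 1 < r),
      W ⟨(i : ℕ) + 1, h⟩ ⊔ (W ⟨(i : ℕ) + 1, h⟩).map T ≤ W i}

/-- Gaussian binomial coefficient `[n choose k]_q`. -/
def gaussNat (q : ℕ) : ℕ → ℕ → ℕ
  | _, 0 => 1
  | 0, _ + 1 => 0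
  | n + 1, k + 1 => gaussNat q n k + q ^ (k + 1) * gaussNat q n (k + 1)

/-- Gaussian binomial coefficient `[n choose k]_q` with integer arguments; it is `0`
unless `0 ≤ k ≤ n`. -/
def gaussZ (q : ℕ) (n k : ℤ) : ℕ :=
  if 0 ≤ k ∧ k ≤ n then gaussNat q n.toNat k.toNat else 0


open Module in
lemma gaussNat_mul_prod (q : ℕ) (n k : ℕ) :
    (gaussNat q n k : ℤ) * ∏ i ∈ Finset.range k, ((q : ℤ) ^ k - (q : ℤ) ^ i) =
      ∏ i ∈ Finset.range k, ((q : ℤ) ^ n - (q : ℤ) ^ i) := by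
  have key : ∀ n k : ℕ, ∏ i ∈ Finset.range (k + 1), ((q : ℤ) ^ (n + 1) - (q : ℤ) ^ i) =
      ((q : ℤ) ^ (n + 1) - 1) * (q : ℤ) ^ k *
        ∏ i ∈ Finset.range k, ((q : ℤ) ^ n - (q : ℤ) ^ i) := by
    intro n k
    rw [Finset.prod_range_succ']
    have : ∀ i ∈ Finset.range k, ((q : ℤ) ^ (n + 1) - (q : ℤ) ^ (i + 1)) =
        (q : ℤ) * ((q : ℤ) ^ n - (q : ℤ) ^ i) := by intro i _; ring
    rw [Finset.prod_congr rfl this, Finset.prod_mul_distrib]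
    simp
    ring
  induction n generalizing k with
  | zero =>
    cases k with
    | zero => simp [gaussNat]
    | succ k => rw [Finset.prod_range_succ' (fun i => (q : ℤ) ^ 0 - (q : ℤ) ^ i)]; simp [gaussNat]
  | succ n ih =>
    cases k with
    | zero => simp [gaussNat]
    | succ k =>
      have e1 := ih k
      have e2 := ih (k + 1)
      rw [Finset.prod_range_succ (fun i => (q : ℤ) ^ n - (q : ℤ) ^ i)] at e2
      rw [key n k]
      rw [key k k] at e2 ⊢
      simp only [gaussNat]
      push_cast
      rw [add_mul]
      have e2' : ((q : ℤ) ^ (k + 1) * (gaussNat q n (k + 1) : ℤ)) *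
          (((q : ℤ) ^ (k + 1) - 1) * (q : ℤ) ^ k *
            ∏ i ∈ Finset.range k, ((q : ℤ) ^ k - (q : ℤ) ^ i)) = (q : ℤ) ^ (k + 1) *
          ((∏ i ∈ Finset.range k, ((q : ℤ) ^ n - (q : ℤ) ^ i)) * ((q : ℤ) ^ n - (q : ℤ) ^ k)) := by
        rw [← e2]; ring
      rw [e2', ← e1]
      ring

open Module in
lemma card_subspaces (F V : Type*) [Field F] [Fintype F]
    [AddCommGroup V] [Module F V] [FiniteDimensional F V] (k : ℕ) (hk : k ≤ finrank F V) :
    Nat.card {W : Submodule F V // finrank F W = k} =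
      gaussNat (Fintype.card F) (finrank F V) k := by
  classical
  have : Finite V := Module.finite_of_finite F
  have : Finite (Submodule F V) := Finite.of_injective (fun W => (W : Set V)) SetLike.coe_injective
  let : Fintype {W : Submodule F V // finrank F W = k} := Fintype.ofFinite _
  let f : {s : Fin k → V // LinearIndependent F s} → {W : Submodule F V // finrank F W = k} :=
    fun s => ⟨Submodule.span F (Set.range s.1), by simpa using finrank_span_eq_card s.2⟩
  have hfib : ∀ W : {W : Submodule F V // finrank F W = k},
      Nat.card {s // f s = W} = ∏ i : Fin k, (Fintype.card F ^ k - Fintype.card F ^ i.val) := by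
    intro W
    have h := card_linearIndependent (K := F) (V := W.1) (k := k) W.2.ge
    rw [W.2] at h
    rw [← h]
    refine (Nat.card_congr (Equiv.ofBijective (fun t : {t : Fin k → W.1 // LinearIndependent F t} =>
      (⟨⟨fun i => (t.1 i : V), t.2.map' W.1.subtype (by simp)⟩, ?_⟩ : {s // f s = W})) ⟨?_, ?_⟩)).symm
    · apply Subtype.ext
      apply Submodule.eq_of_le_of_finrank_eq
      · rw [Submodule.span_le]; rintro _ ⟨i, rfl⟩; exact (t.1 i).2
      · rw [W.2]
        exact (finrank_span_eq_card (t.2.map' W.1.subtype (by simp))).trans (by simp)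
    · intro t t' h
      apply Subtype.ext
      funext i
      apply Subtype.ext
      have := congrArg (fun z => z.1.1 i) h
      exact this
    · rintro ⟨⟨s, hs⟩, rfl⟩
      refine ⟨⟨fun i => ⟨s i, Submodule.subset_span ⟨i, rfl⟩⟩, ?_⟩, rfl⟩
      exact LinearIndependent.of_comp (Submodule.subtype _) hs
  have h1 := Nat.card_congr (Equiv.sigmaFiberEquiv f)
  rw [Nat.card_sigma, Finset.sum_congr rfl (fun W _ => hfib W), card_linearIndependent hk] at h1
  simp only [Finset.sum_const, Finset.card_univ, smul_eq_mul] at h1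
  rw [Nat.card_eq_fintype_card]
  have hq : 1 < Fintype.card F := Fintype.one_lt_card
  have cast : ∀ n, k ≤ n → ((∏ i : Fin k, (Fintype.card F ^ n - Fintype.card F ^ i.val) : ℕ) : ℤ) =
      ∏ i ∈ Finset.range k, ((Fintype.card F : ℤ) ^ n - (Fintype.card F : ℤ) ^ i) := by
    intro n hn
    rw [← Fin.prod_univ_eq_prod_range (fun i => (Fintype.card F : ℤ) ^ n - (Fintype.card F : ℤ) ^ i)]
    push_cast
    refine Finset.prod_congr rfl fun i _ => ?_
    rw [Nat.cast_sub (Nat.pow_le_pow_right hq.le (by omega))]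
    push_cast; rfl
  have h2 := congrArg (Nat.cast : ℕ → ℤ) h1
  rw [Nat.cast_mul, cast _ le_rfl, cast _ hk,
    ← gaussNat_mul_prod _ (finrank F V)] at h2
  have hne : ∏ i ∈ Finset.range k, ((Fintype.card F : ℤ) ^ k - (Fintype.card F : ℤ) ^ i) ≠ 0 := by
    rw [Finset.prod_ne_zero_iff]
    intro i hi
    have : Fintype.card F ^ i < Fintype.card F ^ k :=
      Nat.pow_lt_pow_right hq (Finset.mem_range.1 hi)
    have : (Fintype.card F : ℤ) ^ i < (Fintype.card F : ℤ) ^ k := by exact_mod_cast this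
    omega
  exact_mod_cast mul_right_cancel₀ hne h2

open Module in
lemma card_interval {F V : Type*} [Field F] [Fintype F]
    [AddCommGroup V] [Module F V] [FiniteDimensional F V] (A B : Submodule F V) (hAB : A ≤ B)
    (d : ℕ) :
    Nat.card {W : Submodule F V // A ≤ W ∧ W ≤ B ∧ finrank F W = d} =
      gaussZ (Fintype.card F) ((finrank F B : ℤ) - finrank F A) ((d : ℤ) - finrank F A) := by
  unfold gaussZ
  split_ifs with h
  · have hA : finrank F (A.comap B.subtype) = finrank F A := by
      rw [← Submodule.finrank_map_subtype_eq, Submodule.map_comap_subtype, inf_eq_right.2 hAB]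
    have hQ := Submodule.finrank_quotient_add_finrank (A.comap B.subtype)
    rw [hA] at hQ
    have e1 : ((finrank F B : ℤ) - finrank F A).toNat = finrank F (B ⧸ A.comap B.subtype) := by
      omega
    rw [e1, ← card_subspaces F _ _ (by omega)]
    have hdim : ∀ S : Submodule F (B ⧸ A.comap B.subtype),
        finrank F ((S.comap (A.comap B.subtype).mkQ).map B.subtype) = finrank F S + finrank F A := by
      intro S
      rw [Submodule.finrank_map_subtype_eq]
      have h := LinearMap.finrank_range_add_finrank_ker ((A.comap B.subtype).mkQ.domRestrict
        (S.comap (A.comap B.subtype).mkQ))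
      rw [← h, LinearMap.range_domRestrict, Submodule.map_comap_eq_of_surjective
        (Submodule.mkQ_surjective _), LinearMap.ker_domRestrict, Submodule.ker_mkQ, ← hA]
      congr 1
      rw [← Submodule.finrank_map_subtype_eq, Submodule.map_comap_subtype, inf_eq_right.2]
      intro x hx
      have : (A.comap B.subtype).mkQ x = 0 := by simpa using hx
      rw [Submodule.mem_comap, this]; exact S.zero_mem
    refine (Nat.card_congr (Equiv.ofBijective (fun S : {S : Submodule F (B ⧸ A.comap B.subtype) //
      finrank F S = ((d : ℤ) - finrank F A).toNat} =>
      (⟨(S.1.comap (A.comap B.subtype).mkQ).map B.subtype, ?_, ?_, ?_⟩ :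
        {W : Submodule F V // A ≤ W ∧ W ≤ B ∧ finrank F W = d})) ⟨?_, ?_⟩)).symm
    · intro x hx
      refine ⟨⟨x, hAB hx⟩, ?_, rfl⟩
      have : (A.comap B.subtype).mkQ ⟨x, hAB hx⟩ = 0 := by simpa using hx
      rw [SetLike.mem_coe, Submodule.mem_comap, this]; exact S.1.zero_mem
    · exact Submodule.map_subtype_le _ _
    · rw [hdim, S.2]; omega
    · intro S S' hS
      apply Subtype.ext
      apply Submodule.comap_injective_of_surjective (Submodule.mkQ_surjective _)
      apply Submodule.map_injective_of_injective B.injective_subtype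
      exact congrArg Subtype.val hS
    · rintro ⟨W, h1, h2, h3⟩
      have hW : (((W.comap B.subtype).map (A.comap B.subtype).mkQ).comap
          (A.comap B.subtype).mkQ).map B.subtype = W := by
        rw [Submodule.comap_map_mkQ, sup_eq_right.2 (Submodule.comap_mono h1),
          Submodule.map_comap_subtype, inf_eq_right.2 h2]
      refine ⟨⟨(W.comap B.subtype).map (A.comap B.subtype).mkQ, ?_⟩, Subtype.ext hW⟩
      have := hdim ((W.comap B.subtype).map (A.comap B.subtype).mkQ)
      rw [hW, h3] at this
      omega
  · have : IsEmpty {W : Submodule F V // A ≤ W ∧ W ≤ B ∧ finrank F W = d} := by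
      constructor
      rintro ⟨W, h1, h2, h3⟩
      have := Submodule.finrank_mono h1
      have := Submodule.finrank_mono h2
      omega
    simp

open Module in
lemma finrank_sup_map {F V : Type*} [Field F]
    [AddCommGroup V] [Module F V] [FiniteDimensional F V] (T : V →ₗ[F] V) (U : Submodule F V) :
    finrank F ↥(U ⊔ U.map T) + finrank F ↥(U ⊓ U.comap T) = 2 * finrank F U := by
  have h := LinearMap.finrank_range_add_finrank_ker (U.mkQ.domRestrict (U ⊔ U.map T))
  have h' := LinearMap.finrank_range_add_finrank_ker ((U.mkQ ∘ₗ T).domRestrict U)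
  rw [LinearMap.range_domRestrict, LinearMap.ker_domRestrict, ← Submodule.finrank_map_subtype_eq,
    Submodule.map_comap_subtype] at h h'
  have e : (U ⊔ U.map T).map U.mkQ = U.map (U.mkQ ∘ₗ T) := by
    rw [Submodule.map_sup, Submodule.map_comp]; simp
  rw [LinearMap.ker_comp, Submodule.ker_mkQ] at h'
  rw [e, Submodule.ker_mkQ, inf_eq_right.2 le_sup_left] at h
  omega

lemma double_count {X Y K : Type*} [Finite X] [Finite Y] (P : X → Y → Prop) (s : Finset K)
    (S : K → Set X) (c : K → ℕ)
    (h1 : ∀ k ∈ s, ∀ x ∈ S k, Nat.card {y // P x y} = c k)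
    (h2 : ∀ x y, P x y → ∃ k ∈ s, x ∈ S k)
    (h3 : ∀ k k' x, x ∈ S k → x ∈ S k' → k = k') :
    Nat.card {p : X × Y // P p.1 p.2} = ∑ k ∈ s, (S k).ncard * c k := by
  classical
  let := Fintype.ofFinite X
  have e : {p : X × Y // P p.1 p.2} ≃ Σ x, {y // P x y} :=
    { toFun := fun p => ⟨p.1.1, p.1.2, p.2⟩
      invFun := fun p => ⟨(p.1, p.2.1), p.2.2⟩
      left_inv := fun _ => rfl
      right_inv := fun _ => rfl }
  rw [Nat.card_congr e, Nat.card_sigma]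
  have : ∀ x : X, Nat.card {y // P x y} = ∑ k ∈ s, if x ∈ S k then c k else 0 := by
    intro x
    by_cases h : ∃ k ∈ s, x ∈ S k
    · obtain ⟨k, hk, hx⟩ := h
      rw [Finset.sum_eq_single k, if_pos hx, h1 k hk x hx]
      · intro k' _ hne
        exact if_neg fun hx' => hne (h3 _ _ x hx' hx)
      · exact fun h => absurd hk h
    · have : IsEmpty {y // P x y} := ⟨fun y => h (h2 x y.1 y.2)⟩
      rw [Nat.card_of_isEmpty]
      symm
      apply Finset.sum_eq_zero
      intro k hk
      exact if_neg fun hx => h ⟨k, hk, hx⟩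
  rw [Finset.sum_congr rfl fun x _ => this x, Finset.sum_comm]
  refine Finset.sum_congr rfl fun k _ => ?_
  rw [← Finset.sum_filter, Finset.sum_const, smul_eq_mul, Set.ncard_eq_toFinset_card']
  congr 2
  ext x; simp

lemma card_pi_subtype {r : ℕ} {X : Type*} (Q : Fin r → X → Prop) (P : (Fin r → X) → Prop)
    (h : ∀ f, P f ↔ ∀ i, Q i (f i)) :
    Nat.card {f // P f} = ∏ i, Nat.card {x // Q i x} := by
  rw [← Nat.card_pi]
  exact Nat.card_congr ((Equiv.subtypeEquivRight h).trans Equiv.subtypePiEquivPi)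

/-- the recursion of Lemma 2.5 (Chen–Tseng type recursion).
The sequence `a 0 = (N,N), a 1, …, a r, a (r+1) = (0,0)` encodes
`a_{i,1} = (a i).1` and `a_{i,2} = (a i).2`. -/
theorem tupleSet_ncard_recursion (F V : Type*) [Field F] [Fintype F]
    [AddCommGroup V] [Module F V] [FiniteDimensional F V]
    (T : V →ₗ[F] V) (N r : ℕ) (hN : Module.finrank F V = N)
    (a : ℕ → ℕ × ℕ)
    (h0 : a 0 = (N, N)) (hlast : a (r + 1) = (0, 0))
    (h1 : ∀ i, 1 ≤ i → i ≤ r → (a i).2 ≤ (a i).1)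
    (h2 : ∀ i, i ≤ r → (a (i + 1)).1 ≤ (a i).2)
    (h3 : ∀ i, 1 ≤ i → i ≤ r → 2 * (a i).1 ≤ (a (i - 1)).1 + (a i).2) :
    (Set.ncard (tupleSet T r (fun i => a ((i : ℕ) + 1))) : ℤ) =
      (∑ j ∈ Fintype.piFinset (fun i : Fin r =>
          Finset.Icc (max ((a ((i : ℕ) + 2)).2)
            (2 * (a ((i : ℕ) + 1)).2 - (a ((i : ℕ) + 1)).1)) ((a ((i : ℕ) + 1)).2)),
        (Set.ncard (tupleSet T r (fun i => ((a ((i : ℕ) + 1)).2, j i))) : ℤ) *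
          ∏ i : Fin r,
            (gaussZ (Fintype.card F)
              (((a (i : ℕ)).2 : ℤ) - (2 * ((a ((i : ℕ) + 1)).2 : ℤ) - (j i : ℤ)))
              (((a ((i : ℕ) + 1)).1 : ℤ) - (2 * ((a ((i : ℕ) + 1)).2 : ℤ) - (j i : ℤ))) : ℤ))
      - (∑ k ∈ (Fintype.piFinset (fun i : Fin r =>
            Finset.Icc ((a ((i : ℕ) + 1)).2) ((a ((i : ℕ) + 1)).1))).erase
              (fun i : Fin r => (a ((i : ℕ) + 1)).2),
        (Set.ncard (tupleSet T r (fun i => ((a ((i : ℕ) + 1)).1, k i))) : ℤ) *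
          ∏ i : Fin r,
            (gaussZ (Fintype.card F)
              ((k i : ℤ) - ((a ((i : ℕ) + 2)).1 : ℤ))
              (((a ((i : ℕ) + 1)).2 : ℤ) - ((a ((i : ℕ) + 2)).1 : ℤ)) : ℤ)) := by
  classical
  have : Finite V := Module.finite_of_finite F
  have : Finite (Submodule F V) := Finite.of_injective (fun W => (W : Set V)) SetLike.coe_injective
  let P : (Fin r → Submodule F V) → (Fin r → Submodule F V) → Prop := fun W U =>
    (∀ i : Fin r, Module.finrank F (W i) = (a ((i : ℕ) + 1)).1) ∧
    (∀ i : Fin r, Module.finrank F (U i) = (a ((i : ℕ) + 1)).2) ∧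
    (∀ i : Fin r, U i ≤ W i ⊓ (W i).comap T) ∧
    (∀ (i : Fin r) (h : (i : ℕ) + 1 < r), W ⟨(i : ℕ) + 1, h⟩ ≤ U i)
  have sup_iff : ∀ A B : Submodule F V, A ⊔ A.map T ≤ B ↔ A ≤ B ⊓ B.comap T := by
    intro A B
    rw [sup_le_iff, le_inf_iff, Submodule.map_le_iff_le_comap]
  have uniq : ∀ (b : Fin r → ℕ) (k k' : Fin r → ℕ) (x : Fin r → Submodule F V),
      x ∈ tupleSet T r (fun i => (b i, k i)) → x ∈ tupleSet T r (fun i => (b i, k' i)) →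
      k = k' := by
    intro b k k' x h h'
    funext i
    exact (h.1 i).2.symm.trans (h'.1 i).2
  -- count by `W`
  have cW := double_count P (Fintype.piFinset (fun i : Fin r =>
            Finset.Icc ((a ((i : ℕ) + 1)).2) ((a ((i : ℕ) + 1)).1)))
    (fun k => tupleSet T r (fun i => ((a ((i : ℕ) + 1)).1, k i)))
    (fun k => ∏ i : Fin r, gaussZ (Fintype.card F)
              ((k i : ℤ) - ((a ((i : ℕ) + 2)).1 : ℤ))
              (((a ((i : ℕ) + 1)).2 : ℤ) - ((a ((i : ℕ) + 2)).1 : ℤ)))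
    (by
      intro k _ W hW
      let nx : Fin r → Submodule F V := fun i =>
        if h : (i : ℕ) + 1 < r then W ⟨(i : ℕ) + 1, h⟩ else ⊥
      have hnx : ∀ i, Module.finrank F (nx i) = (a ((i : ℕ) + 2)).1 := by
        intro i
        by_cases h : (i : ℕ) + 1 < r
        · have e : nx i = W ⟨(i : ℕ) + 1, h⟩ := dif_pos h
          rw [e]; exact (hW.1 ⟨(i : ℕ) + 1, h⟩).1
        · have e : nx i = ⊥ := dif_neg h
          have : (i : ℕ) + 2 = r + 1 := by omega
          rw [this, hlast, e]; simp
      have hle : ∀ i, nx i ≤ W i ⊓ (W i).comap T := by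
        intro i
        by_cases h : (i : ℕ) + 1 < r
        · simp only [nx, dif_pos h]; rw [← sup_iff]; exact hW.2 i h
        · simp only [nx, dif_neg h]; exact bot_le
      rw [card_pi_subtype (fun i x => nx i ≤ x ∧ x ≤ W i ⊓ (W i).comap T ∧
        Module.finrank F x = (a ((i : ℕ) + 1)).2)]
      · refine Finset.prod_congr rfl fun i _ => ?_
        rw [card_interval _ _ (hle i), hnx, (hW.1 i).2]
      · intro U
        constructor
        · rintro ⟨_, p2, p3, p4⟩ i
          refine ⟨?_, p3 i, p2 i⟩
          by_cases h : (i : ℕ) + 1 < r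
          · simp only [nx, dif_pos h]; exact p4 i h
          · simp only [nx, dif_neg h]; exact bot_le
        · intro p
          refine ⟨fun i => (hW.1 i).1, fun i => (p i).2.2, fun i => (p i).2.1, fun i h => ?_⟩
          have := (p i).1
          simpa only [nx, dif_pos h] using this)
    (by
      rintro W U ⟨p1, p2, p3, p4⟩
      refine ⟨fun i => Module.finrank F ↥(W i ⊓ (W i).comap T), ?_, ?_, ?_⟩
      · rw [Fintype.mem_piFinset]
        intro i
        rw [Finset.mem_Icc]
        constructor
        · rw [← p2 i]; exact Submodule.finrank_mono (p3 i)
        · rw [← p1 i]; exact Submodule.finrank_mono inf_le_left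
      · exact fun i => ⟨p1 i, rfl⟩
      · intro i h
        rw [sup_iff]
        exact (p4 i h).trans (p3 i))
    (uniq _)
  -- count by `U`
  have cU := double_count (fun U W => P W U) (Fintype.piFinset (fun i : Fin r =>
          Finset.Icc (max ((a ((i : ℕ) + 2)).2)
            (2 * (a ((i : ℕ) + 1)).2 - (a ((i : ℕ) + 1)).1)) ((a ((i : ℕ) + 1)).2)))
    (fun j => tupleSet T r (fun i => ((a ((i : ℕ) + 1)).2, j i)))
    (fun j => ∏ i : Fin r, gaussZ (Fintype.card F)
              (((a (i : ℕ)).2 : ℤ) - (2 * ((a ((i : ℕ) + 1)).2 : ℤ) - (j i : ℤ)))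
              (((a ((i : ℕ) + 1)).1 : ℤ) - (2 * ((a ((i : ℕ) + 1)).2 : ℤ) - (j i : ℤ))))
    (by
      intro j _ U hU
      let pv : Fin r → Submodule F V := fun i =>
        if h : (i : ℕ) = 0 then ⊤ else U ⟨(i : ℕ) - 1, by omega⟩
      have hpv : ∀ i, Module.finrank F (pv i) = (a (i : ℕ)).2 := by
        intro i
        by_cases h : (i : ℕ) = 0
        · have e : pv i = ⊤ := dif_pos h
          rw [e, h, h0, finrank_top, hN]
        · have e : pv i = U ⟨(i : ℕ) - 1, by omega⟩ := dif_neg h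
          rw [e]
          have := (hU.1 ⟨(i : ℕ) - 1, by omega⟩).1
          simp only [Nat.sub_add_cancel (Nat.pos_of_ne_zero h)] at this
          exact this
      have hle : ∀ i, U i ⊔ (U i).map T ≤ pv i := by
        intro i
        by_cases h : (i : ℕ) = 0
        · simp only [pv, dif_pos h]; exact le_top
        · simp only [pv, dif_neg h]
          have := hU.2 ⟨(i : ℕ) - 1, by omega⟩ (by simp only []; omega)
          simp only [Nat.sub_add_cancel (Nat.pos_of_ne_zero h)] at this
          exact this
      rw [card_pi_subtype (fun i x => U i ⊔ (U i).map T ≤ x ∧ x ≤ pv i ∧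
        Module.finrank F x = (a ((i : ℕ) + 1)).1)]
      · refine Finset.prod_congr rfl fun i _ => ?_
        have hs := finrank_sup_map T (U i)
        have q1 := (hU.1 i).1
        have q2 := (hU.1 i).2
        simp only at q1 q2
        rw [q1, q2] at hs
        have e : (Module.finrank F ↥(U i ⊔ (U i).map T) : ℤ) =
            2 * ((a ((i : ℕ) + 1)).2 : ℤ) - (j i : ℤ) := by omega
        rw [card_interval _ _ (hle i), hpv, e]
      · intro W
        constructor
        · rintro ⟨p1, _, p3, p4⟩ i
          refine ⟨(sup_iff _ _).2 (p3 i), ?_, p1 i⟩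
          by_cases h : (i : ℕ) = 0
          · simp only [pv, dif_pos h]; exact le_top
          · simp only [pv, dif_neg h]
            have := p4 ⟨(i : ℕ) - 1, by omega⟩ (by simp only []; omega)
            simp only [Nat.sub_add_cancel (Nat.pos_of_ne_zero h)] at this
            exact this
        · intro p
          refine ⟨fun i => (p i).2.2, fun i => (hU.1 i).1, fun i => (sup_iff _ _).1 (p i).1,
            fun i h => ?_⟩
          have := (p ⟨(i : ℕ) + 1, h⟩).2.1
          simpa [pv] using this)
    (by
      rintro U W ⟨p1, p2, p3, p4⟩
      have hch : ∀ (i : Fin r) (h : (i : ℕ) + 1 < r),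
          U ⟨(i : ℕ) + 1, h⟩ ⊔ (U ⟨(i : ℕ) + 1, h⟩).map T ≤ U i := fun i h =>
        ((sup_iff _ _).2 (p3 _)).trans (p4 i h)
      refine ⟨fun i => Module.finrank F ↥(U i ⊓ (U i).comap T), ?_, ?_, hch⟩
      · rw [Fintype.mem_piFinset]
        intro i
        rw [Finset.mem_Icc, max_le_iff]
        refine ⟨⟨?_, ?_⟩, ?_⟩
        · by_cases h : (i : ℕ) + 1 < r
          · have := p2 ⟨(i : ℕ) + 1, h⟩
            simp only [add_assoc] at this
            rw [← this]
            exact Submodule.finrank_mono ((sup_iff _ _).1 (hch i h))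
          · have : (i : ℕ) + 2 = r + 1 := by omega
            rw [this, hlast]; simp
        · have hs := finrank_sup_map T (U i)
          have := Submodule.finrank_mono ((sup_iff _ _).2 (p3 i))
          rw [p1 i] at this
          rw [p2 i] at hs
          omega
        · rw [← p2 i]; exact Submodule.finrank_mono inf_le_left
      · exact fun i => ⟨p2 i, rfl⟩)
    (uniq _)
  have hsw : Nat.card {p : (Fin r → Submodule F V) × (Fin r → Submodule F V) // P p.1 p.2} =
      Nat.card {p : (Fin r → Submodule F V) × (Fin r → Submodule F V) // P p.2 p.1} :=
    Nat.card_congr ((Equiv.prodComm _ _).subtypeEquiv (fun _ => Iff.rfl))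
  rw [hsw] at cW
  have hmem : (fun i : Fin r => (a ((i : ℕ) + 1)).2) ∈ Fintype.piFinset (fun i : Fin r =>
            Finset.Icc ((a ((i : ℕ) + 1)).2) ((a ((i : ℕ) + 1)).1)) := by
    rw [Fintype.mem_piFinset]
    intro i
    exact Finset.mem_Icc.2 ⟨le_rfl, h1 _ (by omega) (by omega)⟩
  have hE := cW.symm.trans cU
  rw [← Finset.add_sum_erase _ _ hmem] at hE
  have hone : ∏ i : Fin r, gaussZ (Fintype.card F)
              (((a ((i : ℕ) + 1)).2 : ℤ) - ((a ((i : ℕ) + 2)).1 : ℤ))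
              (((a ((i : ℕ) + 1)).2 : ℤ) - ((a ((i : ℕ) + 2)).1 : ℤ)) = 1 := by
    refine Finset.prod_eq_one fun i _ => ?_
    have hz : ∀ n m, n < m → gaussNat (Fintype.card F) n m = 0 := by
      intro n
      induction n with
      | zero => intro m hm; cases m with
        | zero => omega
        | succ m => rfl
      | succ n ih => intro m hm; cases m with
        | zero => omega
        | succ m => simp [gaussNat, ih m (by omega), ih (m + 1) (by omega)]
    have hd : ∀ n, gaussNat (Fintype.card F) n n = 1 := by
      intro n
      induction n with
      | zero => rfl
      | succ n ih => simp [gaussNat, ih, hz n (n + 1) (by omega)]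
    have : (a ((i : ℕ) + 2)).1 ≤ (a ((i : ℕ) + 1)).2 := h2 ((i : ℕ) + 1) (by omega)
    rw [gaussZ, if_pos ⟨by omega, le_rfl⟩, hd]
  rw [hone, mul_one] at hE
  rw [eq_sub_iff_add_eq]
  exact_mod_cast hE
end

section
/- Let T and T' be linear operators of the same similarity class type on finite-dimensional vector spaces over F_q. Then there exists a lattice isomorphism from L(T) to L(T') (a bijection preserving inclusions, intersections and sums) that preserves the dimension of every subspace. -/
/-- `T` has similarity class type `τ`, where `τ` is a multiset of pairs
`(dᵢ, λᵢ)` with `dᵢ` the degree of a monic irreducible polynomial and `λᵢ` an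
integer partition (a multiset of positive parts).  This holds when there is a
finite set `s` of distinct monic irreducible polynomials and partitions `lam p`
for `p ∈ s` such that `τ` is the multiset of pairs `(deg p, lam p)`, every monic
irreducible polynomial outside `s` acts invertibly on `V` (no primary component),
and for `p ∈ s` the `p`-primary elementary divisors of `T` are given by `lam p`;
the latter is recorded by the (characterizing) kernel dimensions
`dim ker p(T)^j = deg p · Σ_{a ∈ lam p} min a j`. -/
def HasType {F V : Type*} [Field F] [AddCommGroup V] [Module F V]
    (τ : Multiset (ℕ × Multiset ℕ)) (T : V →ₗ[F] V) : Prop :=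
  ∃ (s : Finset (Polynomial F)) (lam : Polynomial F → Multiset ℕ),
    (∀ p ∈ s, p.Monic ∧ Irreducible p) ∧
    (∀ p ∈ s, ∀ a ∈ lam p, 0 < a) ∧
    τ = s.val.map (fun p => (p.natDegree, lam p)) ∧
    (∀ p ∈ s, ∀ j : ℕ,
      Module.finrank F ↥(LinearMap.ker (Polynomial.aeval T (p ^ j))) =
        p.natDegree * ((lam p).map (fun a => min a j)).sum) ∧
    (∀ p : Polynomial F, p.Monic → Irreducible p → p ∉ s →
      LinearMap.ker (Polynomial.aeval T p) = ⊥)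

universe u v w
open Polynomial in
theorem aux_root {F : Type*} [Field F] [Fintype F] (p q : F[X]) (hp : Irreducible p)
    (hq : Irreducible q) (h : p.natDegree = q.natDegree) : ∃ g : F[X], p ∣ q.comp g := by
  have := Fact.mk hp
  have := Fact.mk hq
  obtain ⟨c, hc⟩ := CharP.exists F
  have : Fact c.Prime := ⟨CharP.char_is_prime F c⟩
  have : NeZero p.natDegree := ⟨hp.natDegree_pos.ne'⟩
  let e1 := FiniteField.algEquivExtension F c p.natDegree (AdjoinRoot p)
    ((AdjoinRoot.powerBasis hp.ne_zero).finrank)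
  let e2 := FiniteField.algEquivExtension F c p.natDegree (AdjoinRoot q)
    (((AdjoinRoot.powerBasis hq.ne_zero).finrank).trans h.symm)
  let e := e2.trans e1.symm
  obtain ⟨g, hg⟩ := AdjoinRoot.mk_surjective (e (AdjoinRoot.root q))
  refine ⟨g, ?_⟩
  rw [← AdjoinRoot.mk_eq_zero, ← AdjoinRoot.aeval_eq, aeval_comp, AdjoinRoot.aeval_eq, hg,
    aeval_algHom_apply e, AdjoinRoot.aeval_eq, AdjoinRoot.mk_self, map_zero]

open Polynomial in
theorem aux_comp {F : Type*} [Field F] (q g : F[X]) : q.comp g = (q.map C).eval g := by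
  rw [eval_map]; rfl

open Polynomial in
theorem aux_one {F : Type*} [Field F] [Fintype F] (p q : F[X]) (hp : Irreducible p)
    (hq : Irreducible q) (h : p.natDegree = q.natDegree) :
    ∃ g : F[X], p ∣ q.comp g ∧ ¬ p ^ 2 ∣ q.comp g := by
  obtain ⟨g, hg⟩ := aux_root p q hp hq h
  by_cases h2 : p ^ 2 ∣ q.comp g
  · obtain ⟨k, hk⟩ := (q.map C).binomExpansion g p
    rw [← aux_comp, ← aux_comp, derivative_map, ← aux_comp] at hk
    have hs : q.Separable := PerfectField.separable_of_irreducible hq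
    obtain ⟨a, b, hab⟩ := hs
    have hd : ¬ p ∣ (derivative q).comp g := by
      intro hd
      apply hp.not_isUnit
      apply isUnit_of_dvd_one
      have := congrArg (fun f => f.comp g) hab
      simp only [add_comp, mul_comp, one_comp] at this
      rw [← this]
      exact dvd_add (hg.mul_left _) (hd.mul_left _)
    refine ⟨g + p, ?_, ?_⟩
    · rw [hk]
      exact dvd_add (dvd_add hg (dvd_mul_left _ _)) ((dvd_pow_self p two_ne_zero).mul_left _)
    · intro h3
      rw [hk] at h3
      have h4 := (dvd_add_right h2).1 ((dvd_add_left (dvd_mul_left _ _)).1 h3)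
      rw [pow_two] at h4
      exact hd ((mul_dvd_mul_iff_right hp.ne_zero).1 h4)
  · exact ⟨g, hg, h2⟩

open Polynomial in
theorem aux_monic_coprime {F : Type*} [Field F] {p q : F[X]} (hp : Irreducible p)
    (hq : Irreducible q) (mp : p.Monic) (mq : q.Monic) (h : p ≠ q) : IsCoprime p q := by
  rw [hp.coprime_iff_not_dvd]
  intro hd
  exact h (eq_of_monic_of_associated mp mq (hp.associated_of_dvd hq hd))

open Polynomial in
/-- the CRT polynomial -/
theorem aux_crt {F : Type*} [Field F] [Fintype F] (s : Finset F[X])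
    (hs : ∀ p ∈ s, p.Monic ∧ Irreducible p) (σ : s → F[X])
    (hσ : ∀ p, Irreducible (σ p) ∧ p.1.natDegree = (σ p).natDegree) :
    ∃ g : F[X], ∀ p : s, p.1 ∣ (σ p).comp g ∧ ¬ p.1 ^ 2 ∣ (σ p).comp g := by
  choose x hx1 hx2 using fun p : s => aux_one p.1 (σ p) (hs p.1 p.2).2 (hσ p).1 (hσ p).2
  obtain ⟨g, hg⟩ := Ideal.exists_forall_sub_mem_ideal
    (I := fun p : s => Ideal.span {p.1 ^ 2}) (by
      intro p q hpq
      simp only [Function.onFun]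
      rw [Ideal.isCoprime_span_singleton_iff]
      exact (aux_monic_coprime (hs p.1 p.2).2 (hs q.1 q.2).2 (hs p.1 p.2).1 (hs q.1 q.2).1
        (fun h => hpq (Subtype.ext h))).pow) x
  refine ⟨g, fun p => ?_⟩
  have h1 : p.1 ^ 2 ∣ (σ p).comp g - (σ p).comp (x p) := by
    rw [aux_comp, aux_comp]
    exact (Ideal.mem_span_singleton.1 (hg p)).trans (sub_dvd_eval_sub _ _ _)
  have h2 : p.1 ∣ (σ p).comp g - (σ p).comp (x p) := (dvd_pow_self _ two_ne_zero).trans h1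
  constructor
  · simpa using dvd_add h2 (hx1 p)
  · intro h3
    exact hx2 p ((dvd_sub_right h3).1 h1)

open Polynomial in
theorem aux_inj {F V : Type*} [Field F] [AddCommGroup V] [Module F V] [FiniteDimensional F V]
    (T : V →ₗ[F] V) (s : Finset F[X])
    (h : ∀ p : F[X], p.Monic → Irreducible p → p ∉ s → LinearMap.ker (aeval T p) = ⊥)
    (f : F[X]) (hf : ∀ p ∈ s, ¬ p ∣ f) : LinearMap.ker (aeval T f) = ⊥ := by
  have hm : minpoly F T ≠ 0 := minpoly.ne_zero_of_finite F T
  have hc : IsCoprime f (minpoly F T) := by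
    refine isCoprime_of_irreducible_dvd (fun h => hm h.2) ?_
    intro z hz hzf hzm
    classical
    have hn := normalize_associated z
    have hk := h (normalize z) (monic_normalize hz.ne_zero) (hn.symm.irreducible hz)
      (fun hmem => hf _ hmem (hn.dvd.trans hzf))
    obtain ⟨c, hc⟩ := hn.dvd.trans hzm
    have h0 : aeval T (normalize z * c) = 0 := by rw [← hc, minpoly.aeval]
    have hc0 : aeval T c = 0 := by
      ext v
      have := congrArg (fun φ : V →ₗ[F] V => φ v) h0
      rw [map_mul] at this
      have h1 : aeval T c v ∈ LinearMap.ker (aeval T (normalize z)) := this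
      rw [hk] at h1
      exact h1
    have hd := minpoly.dvd F T hc0
    rw [hc] at hd
    have hcn : c ≠ 0 := by rintro rfl; simp [hm] at hc
    have : normalize z * c ∣ 1 * c := by simpa using hd
    exact (hn.symm.irreducible hz).not_isUnit
      (isUnit_of_dvd_one ((mul_dvd_mul_iff_right hcn).1 this))
  obtain ⟨a, b, hab⟩ := hc
  rw [LinearMap.ker_eq_bot']
  intro v hv
  have := congrArg (fun g => aeval T g v) hab
  simpa [hv] using this.symm

open Polynomial in
theorem aux_ker {F V : Type*} [Field F] [Fintype F] [AddCommGroup V] [Module F V] [FiniteDimensional F V]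
    (T : V →ₗ[F] V) (s : Finset F[X]) (hs : ∀ p ∈ s, p.Monic ∧ Irreducible p)
    (h : ∀ p : F[X], p.Monic → Irreducible p → p ∉ s → LinearMap.ker (aeval T p) = ⊥)
    (σ : s → F[X]) (hinj : Function.Injective σ)
    (hσ : ∀ p, ((σ p).Monic ∧ Irreducible (σ p)) ∧ p.1.natDegree = (σ p).natDegree) :
    ∃ g : F[X], (∀ p : s, ∀ j : ℕ,
        LinearMap.ker (aeval (aeval T g) (σ p ^ j)) = LinearMap.ker (aeval T (p.1 ^ j))) ∧
      ∀ q : F[X], q.Monic → Irreducible q → q ∉ Set.range σ → ∀ j : ℕ,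
        LinearMap.ker (aeval (aeval T g) (q ^ j)) = ⊥ := by
  obtain ⟨g, hg⟩ := aux_crt s hs σ (fun p => ⟨(hσ p).1.2, (hσ p).2⟩)
  have key : ∀ q : F[X], q.Monic → Irreducible q → ∀ p : s, q ≠ σ p → ∀ j : ℕ,
      ¬ p.1 ∣ (q ^ j).comp g := by
    intro q mq hq p hne j hd
    rw [pow_comp] at hd
    have hd := (hs p.1 p.2).2.prime.dvd_of_dvd_pow hd
    obtain ⟨a, b, hab⟩ := aux_monic_coprime hq (hσ p).1.2 mq (hσ p).1.1 hne
    have := congrArg (fun f => f.comp g) hab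
    simp only [add_comp, mul_comp, one_comp] at this
    apply (hs p.1 p.2).2.not_isUnit
    apply isUnit_of_dvd_one
    rw [← this]
    exact dvd_add (hd.mul_left _) ((hg p).1.mul_left _)
  refine ⟨g, ?_, ?_⟩
  · intro p j
    obtain ⟨u, hu⟩ := (hg p).1
    have hinju : LinearMap.ker (aeval T (u ^ j)) = ⊥ := by
      apply aux_inj T s h
      intro r hr hd
      have hru := (hs r hr).2.prime.dvd_of_dvd_pow hd
      by_cases hrp : r = p.1
      · subst hrp
        apply (hg p).2
        rw [hu, pow_two]
        exact mul_dvd_mul_left _ hru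
      · refine key (σ p) (hσ p).1.1 (hσ p).1.2 ⟨r, hr⟩
          (fun hh => hrp (congrArg Subtype.val (hinj hh)).symm) 1 ?_
        rw [pow_one, hu]
        exact hru.mul_left _
    rw [← aeval_comp, pow_comp, hu, mul_pow, mul_comm, map_mul, Module.End.mul_eq_comp,
      LinearMap.ker_comp_of_ker_eq_bot _ hinju]
  · intro q mq hq hr j
    rw [← aeval_comp]
    apply aux_inj T s h
    intro p hp
    exact key q mq hq ⟨p, hp⟩ (fun hh => hr ⟨_, hh.symm⟩) j
open Polynomial in
theorem sim_struct {F : Type u} {V : Type v} [Field F] [AddCommGroup V] [Module F V]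
    [FiniteDimensional F V] (T : V →ₗ[F] V) :
    ∃ (ι : Type u) (_ : Fintype ι) (I : ι → Ideal F[X]),
      (∀ i, ∃ (p : F[X]) (e : ℕ), p.Monic ∧ Irreducible p ∧ 0 < e ∧ I i = Ideal.span {p ^ e}) ∧
      ∃ E : V ≃ₗ[F] (∀ i, F[X] ⧸ I i), ∀ (f : F[X]) (v : V), E (aeval T f v) = f • E v := by
  classical
  have ht : Module.IsTorsion F[X] (Module.AEval' T) :=
    Module.AEval.isTorsion_of_finiteDimensional F V T
  obtain ⟨ι, hι, p, hp, e, ⟨E⟩⟩ := Module.equiv_directSum_of_isTorsion ht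
  let J : ι → Ideal F[X] := fun i => Submodule.span F[X] {p i ^ e i}
  let E1 : Module.AEval' T ≃ₗ[F[X]] (∀ i, F[X] ⧸ J i) :=
    E.trans (DirectSum.linearEquivFunOnFintype F[X] ι (fun i => F[X] ⧸ J i))
  let R : (∀ i, F[X] ⧸ J i) →ₗ[F[X]] (∀ i : {i // e i ≠ 0}, F[X] ⧸ J i.1) :=
    LinearMap.pi fun i => LinearMap.proj i.1
  have hR : Function.Bijective R := by
    constructor
    · rw [← LinearMap.ker_eq_bot, LinearMap.ker_eq_bot']
      intro x hx
      funext i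
      by_cases hi : e i = 0
      · have : J i = ⊤ := by simp [J, hi]
        have : Subsingleton (F[X] ⧸ J i) := Ideal.Quotient.subsingleton_iff.2 this
        exact Subsingleton.elim _ _
      · exact congrFun hx ⟨i, hi⟩
    · intro y
      refine ⟨fun i => if h : e i ≠ 0 then y ⟨i, h⟩ else 0, ?_⟩
      funext i
      have := i.2
      simp [R, this]
  let E2 := E1.trans (LinearEquiv.ofBijective R hR)
  refine ⟨{i // e i ≠ 0}, inferInstance, fun i => J i.1, ?_, ?_⟩
  · intro i
    have ha := normalize_associated (p i.1)
    refine ⟨normalize (p i.1), e i.1, monic_normalize (hp _).ne_zero,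
      ha.symm.irreducible (hp _), Nat.pos_of_ne_zero i.2, ?_⟩
    exact Ideal.span_singleton_eq_span_singleton.2 (ha.symm.pow_pow)
  · refine ⟨(Module.AEval'.of T).trans (E2.restrictScalars F), ?_⟩
    intro f v
    simp only [LinearEquiv.trans_apply, LinearEquiv.restrictScalars_apply]
    rw [← map_smul]
    rfl

open Polynomial in
theorem sim_tor {F : Type*} [Field F] (h f d k : F[X]) (hh : h ≠ 0) (hd : h = k * d)
    (hk : ∀ x, h ∣ f * x ↔ k ∣ x) :
    Module.finrank F (Submodule.torsionBy F[X] (F[X] ⧸ Ideal.span {h}) f) = d.natDegree := by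
  have hd0 : d ≠ 0 := by rintro rfl; simp at hd; exact hh hd
  have hk0 : k ≠ 0 := by rintro rfl; simp at hd; exact hh hd
  let φ : F[X] →ₗ[F[X]] (F[X] ⧸ Ideal.span {h}) :=
    (Ideal.span {h}).mkQ ∘ₗ LinearMap.mulLeft F[X] k
  have hker : LinearMap.ker φ = Ideal.span {d} := by
    ext x
    rw [LinearMap.mem_ker, Ideal.mem_span_singleton]
    change Submodule.Quotient.mk (k * x) = 0 ↔ _
    rw [Submodule.Quotient.mk_eq_zero, Ideal.mem_span_singleton, hd, mul_dvd_mul_iff_left hk0]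
  have hran : LinearMap.range φ = Submodule.torsionBy F[X] (F[X] ⧸ Ideal.span {h}) f := by
    ext x
    obtain ⟨x, rfl⟩ := Submodule.Quotient.mk_surjective _ x
    rw [Submodule.mem_torsionBy_iff, ← Submodule.Quotient.mk_smul, Submodule.Quotient.mk_eq_zero,
      Ideal.mem_span_singleton, smul_eq_mul, hk]
    constructor
    · rintro ⟨y, hy⟩
      change Submodule.Quotient.mk (k * y) = _ at hy
      rw [Submodule.Quotient.eq, Ideal.mem_span_singleton] at hy
      have : k ∣ k * y - x := (Dvd.intro _ hd.symm).trans hy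
      exact (dvd_sub_right (dvd_mul_right _ _)).1 this
    · rintro ⟨y, rfl⟩
      exact ⟨y, rfl⟩
  rw [← hran, ← (φ.quotKerEquivRange.restrictScalars F).finrank_eq, hker]
  exact (AdjoinRoot.powerBasis hd0).finrank

open Polynomial in
theorem sim_monic_coprime {F : Type*} [Field F] {p q : F[X]} (hp : Irreducible p)
    (hq : Irreducible q) (mp : p.Monic) (mq : q.Monic) (h : p ≠ q) : IsCoprime p q := by
  rw [hp.coprime_iff_not_dvd]
  intro hd
  exact h (eq_of_monic_of_associated mp mq (hp.associated_of_dvd hq hd))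

open Polynomial Classical in
theorem sim_step {F : Type*} [Field F] (I : Ideal F[X])
    (hI : ∃ (p : F[X]) (e : ℕ), p.Monic ∧ Irreducible p ∧ 0 < e ∧ I = Ideal.span {p ^ e})
    (p : F[X]) (mp : p.Monic) (hp : Irreducible p) (j : ℕ) :
    Module.finrank F (Submodule.torsionBy F[X] (F[X] ⧸ I) (p ^ (j + 1))) =
    Module.finrank F (Submodule.torsionBy F[X] (F[X] ⧸ I) (p ^ j)) +
      p.natDegree * (if I ≤ Ideal.span {p ^ (j + 1)} then 1 else 0) := by
  obtain ⟨q, e, mq, hq, he, rfl⟩ := hI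
  rw [Ideal.span_singleton_le_span_singleton]
  by_cases hpq : q = p
  · subst hpq
    have key : ∀ j, Module.finrank F
        (Submodule.torsionBy F[X] (F[X] ⧸ Ideal.span {q ^ e}) (q ^ j)) =
        q.natDegree * min e j := by
      intro j
      rw [sim_tor (q ^ e) (q ^ j) (q ^ min e j) (q ^ (e - j)) (pow_ne_zero _ hq.ne_zero)]
      · rw [natDegree_pow, mul_comm]
      · rw [← pow_add]; congr 1; omega
      · intro x
        rcases le_total j e with hje | hje
        · rw [show q ^ e = q ^ j * q ^ (e - j) by rw [← pow_add]; congr 1; omega,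
            mul_dvd_mul_iff_left (pow_ne_zero _ hq.ne_zero)]
        · simp only [Nat.sub_eq_zero_of_le hje, pow_zero, isUnit_one, IsUnit.dvd, iff_true]
          exact (pow_dvd_pow _ hje).mul_right _
    rw [key, key, ← mul_add]
    congr 1
    rw [pow_dvd_pow_iff hq.ne_zero hq.not_isUnit]
    split_ifs <;> omega
  · have hc := sim_monic_coprime hq hp mq mp hpq
    have key : ∀ j, Module.finrank F
        (Submodule.torsionBy F[X] (F[X] ⧸ Ideal.span {q ^ e}) (p ^ j)) = 0 := by
      intro j
      rw [sim_tor (q ^ e) (p ^ j) 1 (q ^ e) (pow_ne_zero _ hq.ne_zero)]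
      · simp
      · simp
      · intro x
        exact ⟨fun hx => (hc.pow (m := e) (n := j)).dvd_of_dvd_mul_left hx, fun hx => hx.mul_left _⟩
    rw [key, key, if_neg, mul_zero, add_zero]
    intro hd
    exact hq.coprime_iff_not_dvd.1 hc
      (((hp.dvd_symm hq) ((hp.prime.dvd_of_dvd_pow ((dvd_pow_self _ (by omega)).trans hd)))))

open Polynomial in
theorem sim_dim {F V : Type*} [Field F] [AddCommGroup V] [Module F V]
    (T : V →ₗ[F] V) {ι : Type*} [Fintype ι] (I : ι → Ideal F[X])
    (E : V ≃ₗ[F] (∀ i, F[X] ⧸ I i)) (hE : ∀ (f : F[X]) (v : V), E (aeval T f v) = f • E v)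
    (hI : ∀ i, I i ≠ ⊥) (f : F[X]) :
    Module.finrank F (LinearMap.ker (aeval T f)) =
      ∑ i, Module.finrank F (Submodule.torsionBy F[X] (F[X] ⧸ I i) f) := by
  have hfin : ∀ i, Module.Finite F (F[X] ⧸ I i) := by
    intro i
    obtain ⟨h, hh⟩ := (IsPrincipalIdealRing.principal (I i)).principal
    have h0 : h ≠ 0 := by
      rintro rfl
      exact hI i (by simp [hh])
    rw [hh]
    exact (AdjoinRoot.powerBasis h0).finite
  have hfin2 : ∀ i, Module.Finite F (Submodule.torsionBy F[X] (F[X] ⧸ I i) f) := fun i =>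
    Module.Finite.of_injective ((Submodule.subtype _).restrictScalars F)
      (Submodule.subtype_injective _)
  have hfree : ∀ i, Module.Free F (Submodule.torsionBy F[X] (F[X] ⧸ I i) f) := fun i =>
    Module.Free.of_divisionRing F _
  rw [← Module.finrank_pi_fintype F]
  refine LinearEquiv.finrank_eq
    { toFun := fun v i => ⟨E v.1 i, ?_⟩
      map_add' := ?_
      map_smul' := ?_
      invFun := fun x => ⟨E.symm (fun i => (x i).1), ?_⟩
      left_inv := ?_
      right_inv := ?_ }
  · have := hE f v.1
    rw [LinearMap.mem_ker.1 v.2, map_zero] at this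
    exact (congrFun this i).symm
  · intro x y
    funext i
    apply Subtype.ext
    simp
  · intro c x
    funext i
    apply Subtype.ext
    simp
  · rw [LinearMap.mem_ker]
    apply E.injective
    rw [hE, map_zero, LinearEquiv.apply_symm_apply]
    funext i
    exact (x i).2
  · intro v
    simp
  · intro x
    funext i
    apply Subtype.ext
    simp

theorem fiber_equiv {α β γ : Type*} [Finite α] [Finite β] (f : α → γ) (g : β → γ)
    (h : ∀ c, Nat.card {a // f a = c} = Nat.card {b // g b = c}) :
    ∃ e : α ≃ β, ∀ a, g (e a) = f a :=
  ⟨Equiv.ofFiberEquiv fun c => (Finite.card_eq.1 (h c)).some,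
    fun a => Equiv.ofFiberEquiv_map _ a⟩

open Polynomial Classical in
theorem sim_main {F : Type u} {V : Type v} {V' : Type w} [Field F] [AddCommGroup V] [Module F V]
    [FiniteDimensional F V] [AddCommGroup V'] [Module F V'] [FiniteDimensional F V']
    (T : V →ₗ[F] V) (T' : V' →ₗ[F] V')
    (h : ∀ p : F[X], p.Monic → Irreducible p → ∀ j : ℕ,
      Module.finrank F (LinearMap.ker (aeval T (p ^ j))) =
      Module.finrank F (LinearMap.ker (aeval T' (p ^ j)))) :
    ∃ E : V ≃ₗ[F] V', ∀ v, E (T v) = T' (E v) := by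
  obtain ⟨ι, _, I, hI, E, hE⟩ := sim_struct T
  obtain ⟨ι', _, I', hI', E', hE'⟩ := sim_struct T'
  have nb : ∀ I : Ideal F[X], (∃ (p : F[X]) (e : ℕ), p.Monic ∧ Irreducible p ∧ 0 < e ∧
      I = Ideal.span {p ^ e}) → I ≠ ⊥ := by
    rintro _ ⟨p, e, mp, hp, he, rfl⟩ h0
    rw [Ideal.span_singleton_eq_bot] at h0
    exact pow_ne_zero _ hp.ne_zero h0
  have count : ∀ p : F[X], p.Monic → Irreducible p → ∀ j : ℕ,
      (∑ i, if I i ≤ Ideal.span {p ^ (j + 1)} then 1 else 0) =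
      (∑ i, if I' i ≤ Ideal.span {p ^ (j + 1)} then 1 else 0) := by
    intro p mp hp j
    have h1 := h p mp hp j
    have h2 := h p mp hp (j + 1)
    rw [sim_dim T I E hE (fun i => nb _ (hI i)), sim_dim T' I' E' hE' (fun i => nb _ (hI' i))]
      at h1 h2
    simp only [fun i => sim_step (I i) (hI i) p mp hp j,
      fun i => sim_step (I' i) (hI' i) p mp hp j, Finset.sum_add_distrib, ← Finset.mul_sum] at h2
    rw [h1] at h2
    exact Nat.eq_of_mul_eq_mul_left hp.natDegree_pos (Nat.add_left_cancel h2)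
  have ind : ∀ J : Ideal F[X], (∃ (p : F[X]) (e : ℕ), p.Monic ∧ Irreducible p ∧ 0 < e ∧
      J = Ideal.span {p ^ e}) → ∀ p : F[X], p.Monic → Irreducible p → ∀ j : ℕ,
      (if J ≤ Ideal.span {p ^ (j + 1)} then 1 else 0) =
      (if J = Ideal.span {p ^ (j + 1)} then 1 else 0) +
      (if J ≤ Ideal.span {p ^ (j + 1 + 1)} then 1 else 0) := by
    rintro _ ⟨q, e, mq, hq, he, rfl⟩ p mp hp j
    have hle : ∀ k, 0 < k → (Ideal.span {q ^ e} ≤ Ideal.span {p ^ k} ↔ q = p ∧ k ≤ e) := by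
      intro k hk
      rw [Ideal.span_singleton_le_span_singleton]
      constructor
      · intro hd
        have hpq : q = p := by
          by_contra hne
          exact hq.coprime_iff_not_dvd.1 (sim_monic_coprime hq hp mq mp hne)
            ((hp.dvd_symm hq) (hp.prime.dvd_of_dvd_pow ((dvd_pow_self _ hk.ne').trans hd)))
        subst hpq
        exact ⟨rfl, (pow_dvd_pow_iff hq.ne_zero hq.not_isUnit).1 hd⟩
      · rintro ⟨rfl, hke⟩
        exact pow_dvd_pow _ hke
    have heq : Ideal.span {q ^ e} = Ideal.span {p ^ (j + 1)} ↔ q = p ∧ e = j + 1 := by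
      constructor
      · intro hh
        have h1 := (hle (j + 1) (by omega)).1 hh.le
        refine ⟨h1.1, le_antisymm ?_ h1.2⟩
        have h2 := hh.ge
        rw [← h1.1, Ideal.span_singleton_le_span_singleton,
          pow_dvd_pow_iff hq.ne_zero hq.not_isUnit] at h2
        exact h2
      · rintro ⟨rfl, rfl⟩; rfl
    rw [hle _ (by omega), hle _ (by omega)]
    simp only [heq]
    by_cases hqp : q = p
    · simp only [hqp, true_and]
      split_ifs <;> omega
    · simp [hqp]
  obtain ⟨e, he⟩ := fiber_equiv I I' (by
    intro c
    by_cases hc : ∃ (p : F[X]) (e : ℕ), p.Monic ∧ Irreducible p ∧ 0 < e ∧ c = Ideal.span {p ^ e}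
    · obtain ⟨p, e, mp, hp, he, rfl⟩ := hc
      obtain ⟨j, rfl⟩ : ∃ j, e = j + 1 := ⟨e - 1, by omega⟩
      have c1 := count p mp hp j
      have c2 := count p mp hp (j + 1)
      simp only [fun i => ind (I i) (hI i) p mp hp j, fun i => ind (I' i) (hI' i) p mp hp j,
        Finset.sum_add_distrib] at c1
      rw [c2] at c1
      have c3 := Nat.add_right_cancel c1
      rw [Nat.card_eq_fintype_card, Nat.card_eq_fintype_card, Fintype.card_subtype,
        Fintype.card_subtype, Finset.card_filter, Finset.card_filter]
      exact c3
    · have h1 : IsEmpty {a // I a = c} := ⟨fun a => hc (a.2 ▸ hI a.1)⟩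
      have h2 : IsEmpty {a // I' a = c} := ⟨fun a => hc (a.2 ▸ hI' a.1)⟩
      simp)
  obtain rfl : I = fun i => I' (e i) := funext fun i => (he i).symm
  let P := LinearEquiv.piCongrLeft F[X] (fun i' => F[X] ⧸ I' i') e
  refine ⟨(E.trans (P.restrictScalars F)).trans E'.symm, ?_⟩
  intro v
  apply E'.injective
  have h1 := hE X v
  have h2 := hE' X (E'.symm (P (E v)))
  rw [aeval_X] at h1 h2
  simp only [LinearEquiv.trans_apply, LinearEquiv.restrictScalars_apply,
    LinearEquiv.apply_symm_apply] at h2 ⊢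
  rw [h2, h1, map_smul]

open Polynomial in
theorem half {F : Type u} {V : Type v} {V' : Type w} [Field F] [Fintype F]
    [AddCommGroup V] [Module F V]
    [FiniteDimensional F V] [AddCommGroup V'] [Module F V'] [FiniteDimensional F V']
    (T : V →ₗ[F] V) (T' : V' →ₗ[F] V') (τ : Multiset (ℕ × Multiset ℕ))
    (h : HasType τ T) (h' : HasType τ T') :
    ∃ (g : F[X]) (E : V ≃ₗ[F] V'), ∀ v, E (aeval T g v) = T' (E v) := by
  classical
  obtain ⟨s, lam, hs, -, hτ, hk, hb⟩ := h
  obtain ⟨s', lam', hs', -, hτ', hk', hb'⟩ := h'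
  have hcard : ∀ (s : Finset F[X]) (f : F[X] → ℕ × Multiset ℕ) (c),
      Nat.card {a : s // f a.1 = c} = (s.val.map f).count c := by
    intro s f c
    rw [Multiset.count_map, Nat.card_eq_fintype_card, Fintype.card_subtype]
    have : (Finset.univ.filter fun a : s => f a.1 = c).card =
        (s.filter fun a => c = f a).card := by
      rw [← Finset.card_map (Function.Embedding.subtype _)]
      congr 1
      ext x
      simp [eq_comm, and_comm]
    rw [this]
    rfl
  obtain ⟨e, he⟩ := fiber_equiv (fun p : s => (p.1.natDegree, lam p.1))
    (fun p : s' => (p.1.natDegree, lam' p.1)) (by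
      intro c
      rw [hcard s (fun p => (p.natDegree, lam p)), hcard s' (fun p => (p.natDegree, lam' p)),
        ← hτ, ← hτ'])
  obtain ⟨g, hg1, hg2⟩ := aux_ker T s hs hb (fun p => (e p).1)
    (Subtype.val_injective.comp e.injective)
    (fun p => ⟨hs' _ (e p).2, (congrArg Prod.fst (he p)).symm⟩)
  refine ⟨g, sim_main (aeval T g) T' ?_⟩
  intro q mq hq j
  by_cases hqs : q ∈ s'
  · obtain ⟨p, hp⟩ := e.surjective ⟨q, hqs⟩
    have hp1 : (e p).1 = q := congrArg Subtype.val hp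
    have h1 := hg1 p j
    have h2 := he p
    simp only [hp1, Prod.mk.injEq] at h1 h2
    rw [h1, hk p.1 p.2, hk' q hqs, h2.1, h2.2]
  · rw [hg2 q mq hq ?_ j, map_pow]
    · have : LinearMap.ker (aeval T' q ^ j) = ⊥ := by
        rw [LinearMap.ker_eq_bot, Module.End.coe_pow]
        exact (LinearMap.ker_eq_bot.1 (hb' q mq hq hqs)).iterate j
      rw [this]
      simp
    · rintro ⟨p, rfl⟩
      exact hqs (e p).2

open Polynomial in
theorem half_map {F : Type u} {V : Type v} {V' : Type w} [Field F]
    [AddCommGroup V] [Module F V] [AddCommGroup V'] [Module F V']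
    (T : V →ₗ[F] V) (T' : V' →ₗ[F] V') (g : F[X]) (E : V ≃ₗ[F] V')
    (hE : ∀ v, E (aeval T g v) = T' (E v)) (W : Submodule F V) (hW : W.map T ≤ W) :
    (W.map E.toLinearMap).map T' ≤ W.map E.toLinearMap := by
  have hg : ∀ f : F[X], ∀ v ∈ W, aeval T f v ∈ W := by
    intro f
    induction f using Polynomial.induction_on with
    | C a => intro v hv; simpa using W.smul_mem a hv
    | add p q hp hq => intro v hv; simpa using W.add_mem (hp v hv) (hq v hv)
    | monomial n a ih =>
      intro v hv
      rw [pow_succ, ← mul_assoc, map_mul, aeval_X, Module.End.mul_apply]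
      exact ih _ (hW (Submodule.mem_map_of_mem hv))
  rintro _ ⟨_, ⟨v, hv, rfl⟩, rfl⟩
  exact ⟨aeval T g v, hg g v hv, hE v⟩

/-- operators of the same similarity class type have dimension-preserving
isomorphic lattices of invariant subspaces. -/
theorem lattice_iso_of_same_type (F V V' : Type*) [Field F] [Fintype F]
    [AddCommGroup V] [Module F V] [FiniteDimensional F V]
    [AddCommGroup V'] [Module F V'] [FiniteDimensional F V']
    (T : V →ₗ[F] V) (T' : V' →ₗ[F] V')
    (h : ∃ τ : Multiset (ℕ × Multiset ℕ), HasType τ T ∧ HasType τ T') :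
    ∃ e : {W : Submodule F V // W.map T ≤ W} ≃ {W : Submodule F V' // W.map T' ≤ W},
      (∀ W₁ W₂, W₁.1 ≤ W₂.1 ↔ (e W₁).1 ≤ (e W₂).1) ∧
      (∀ W₁ W₂ W₃, W₃.1 = W₁.1 ⊓ W₂.1 → (e W₃).1 = (e W₁).1 ⊓ (e W₂).1) ∧
      (∀ W₁ W₂ W₃, W₃.1 = W₁.1 ⊔ W₂.1 → (e W₃).1 = (e W₁).1 ⊔ (e W₂).1) ∧
      (∀ W, Module.finrank F ↥(e W).1 = Module.finrank F ↥W.1) := by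
  obtain ⟨τ, h1, h2⟩ := h
  obtain ⟨g, E, hE⟩ := half T T' τ h1 h2
  obtain ⟨g', E', hE'⟩ := half T' T τ h2 h1
  have : Finite V := Module.finite_of_finite F
  have : Finite V' := Module.finite_of_finite F
  have : Finite (Submodule F V) := Finite.of_injective _ SetLike.coe_injective
  have : Finite (Submodule F V') := Finite.of_injective _ SetLike.coe_injective
  let a : {W : Submodule F V // W.map T ≤ W} → {W : Submodule F V' // W.map T' ≤ W} :=
    fun W => ⟨W.1.map E.toLinearMap, half_map T T' g E hE W.1 W.2⟩
  let b : {W : Submodule F V' // W.map T' ≤ W} → {W : Submodule F V // W.map T ≤ W} :=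
    fun W => ⟨W.1.map E'.toLinearMap, half_map T' T g' E' hE' W.1 W.2⟩
  have ha : Function.Injective a := fun W₁ W₂ hh =>
    Subtype.ext (Submodule.map_injective_of_injective E.injective (congrArg Subtype.val hh))
  have hb : Function.Injective b := fun W₁ W₂ hh =>
    Subtype.ext (Submodule.map_injective_of_injective E'.injective (congrArg Subtype.val hh))
  have hbij : Function.Bijective a := by
    rw [Nat.bijective_iff_injective_and_card]
    exact ⟨ha, le_antisymm (Nat.card_le_card_of_injective a ha)
      (Nat.card_le_card_of_injective b hb)⟩
  refine ⟨Equiv.ofBijective a hbij, ?_, ?_, ?_, ?_⟩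
  · intro W₁ W₂
    exact (Submodule.map_le_map_iff_of_injective E.injective _ _).symm
  · intro W₁ W₂ W₃ hh
    change W₃.1.map E.toLinearMap = W₁.1.map E.toLinearMap ⊓ W₂.1.map E.toLinearMap
    rw [hh, Submodule.map_inf _ E.injective]
  · intro W₁ W₂ W₃ hh
    change W₃.1.map E.toLinearMap = W₁.1.map E.toLinearMap ⊔ W₂.1.map E.toLinearMap
    rw [hh, Submodule.map_sup]
  · intro W
    exact LinearEquiv.finrank_map_eq E W.1
end

section
/- Let T and T' be linear operators of the same similarity class type on md-dimensional vector spaces over F_q, where m, d are positive integers. Then σ(m,d;T) = σ(m,d;T'). -/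
/-- `W` is an `m`-dimensional `T`-splitting subspace: `V = W ⊕ TW ⊕ ⋯ ⊕ T^{d-1}W`. -/
def IsSplittingSubspace {F V : Type*} [Field F] [AddCommGroup V] [Module F V]
    (T : V →ₗ[F] V) (m d : ℕ) (W : Submodule F V) : Prop :=
  Module.finrank F W = m ∧
  iSupIndep (fun i : Fin d => W.map (T ^ (i : ℕ))) ∧
  (⨆ i : Fin d, W.map (T ^ (i : ℕ))) = ⊤

/-- `σ(m,d;T)`, the number of `m`-dimensional `T`-splitting subspaces. -/
noncomputable def splitCount {F V : Type*} [Field F] [AddCommGroup V] [Module F V]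
    (T : V →ₗ[F] V) (m d : ℕ) : ℕ :=
  Set.ncard {W : Submodule F V | IsSplittingSubspace T m d W}

namespace SplitAux
open Polynomial

/-- degree strictly less than `d` -/
def Lt {F : Type*} [Field F] (d : ℕ) (f : F[X]) : Prop := ∀ n, d ≤ n → f.coeff n = 0

section B1
variable {F : Type*} [Field F]

lemma Lt.mono {a b : ℕ} {f : F[X]} (h : Lt a f) (hab : a ≤ b) : Lt b f :=
  fun n hn => h n (hab.trans hn)

lemma Lt.zero (a : ℕ) : Lt a (0 : F[X]) := fun n _ => by simp

lemma Lt.add {a : ℕ} {f g : F[X]} (hf : Lt a f) (hg : Lt a g) : Lt a (f + g) :=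
  fun n hn => by rw [coeff_add, hf n hn, hg n hn, add_zero]

lemma Lt.sub {a : ℕ} {f g : F[X]} (hf : Lt a f) (hg : Lt a g) : Lt a (f - g) :=
  fun n hn => by rw [coeff_sub, hf n hn, hg n hn, sub_zero]

lemma Lt.sum {a : ℕ} {ι : Type*} {s : Finset ι} {f : ι → F[X]} (hf : ∀ i ∈ s, Lt a (f i)) :
    Lt a (∑ i ∈ s, f i) := fun n hn => by
  rw [finsetSum_coeff]; exact Finset.sum_eq_zero fun i hi => hf i hi n hn

lemma Lt.natDegree_le {a : ℕ} {f : F[X]} (hf : Lt (a+1) f) : f.natDegree ≤ a :=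
  natDegree_le_iff_coeff_eq_zero.2 fun n hn => hf n hn

lemma Lt.eq_zero {f : F[X]} (hf : Lt 0 f) : f = 0 := by
  ext n; simpa using hf n (Nat.zero_le _)

lemma Lt.exists (f : F[X]) : ∃ a, Lt a f :=
  ⟨f.natDegree + 1, fun n hn => coeff_eq_zero_of_natDegree_lt hn⟩

lemma lt_of_natDegree {f : F[X]} {a : ℕ} (h : f.natDegree < a) : Lt a f :=
  fun _ hn => coeff_eq_zero_of_natDegree_lt (h.trans_le hn)

/-- product bounded -/
lemma Lt.mul {a b : ℕ} {f g : F[X]} (hf : Lt a f) (hg : Lt (b+1) g) : Lt (a + b) (f * g) := by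
  rcases a with _ | a
  · rw [hf.eq_zero, zero_mul]; exact Lt.zero _
  · apply lt_of_natDegree
    have := natDegree_mul_le (p := f) (q := g)
    have := hf.natDegree_le
    have := hg.natDegree_le
    omega

lemma coeff_top {e k : ℕ} {h v : F[X]} (hh : Lt (e + 1 - k) h) (hv : Lt (k+1) v) :
    (h * v).coeff e = (if k ≤ e then h.coeff (e - k) else 0) * v.coeff k := by
  split_ifs with hk
  · have h1 : h.natDegree ≤ e - k := Lt.natDegree_le (hh.mono (by omega))
    have := coeff_mul_add_eq_of_natDegree_le h1 hv.natDegree_le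
    rwa [Nat.sub_add_cancel hk] at this
  · have : h = 0 := Lt.eq_zero (hh.mono (by omega))
    simp [this]

variable {m : ℕ}

/-- leading matrix -/
def lead (k : Fin m → ℕ) (v : Fin m → Fin m → F[X]) : Matrix (Fin m) (Fin m) F :=
  Matrix.of fun i j => (v i j).coeff (k i)

lemma sum_Lt {d : ℕ} {k : Fin m → ℕ} {v : Fin m → Fin m → F[X]} (hv : ∀ i j, Lt (k i + 1) (v i j))
    {h : Fin m → F[X]} (hh : ∀ i, Lt (d - k i) (h i)) (j : Fin m) :
    Lt d (∑ i, h i * v i j) := by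
  apply Lt.sum
  intro i _
  by_cases hk : k i ≤ d
  · exact ((hh i).mul (hv i j)).mono (by omega)
  · have : h i = 0 := Lt.eq_zero ((hh i).mono (by omega))
    rw [this, zero_mul]; exact Lt.zero _

lemma red_unique {k : Fin m → ℕ} {v : Fin m → Fin m → F[X]} (hv : ∀ i j, Lt (k i + 1) (v i j))
    (hL : (lead k v).det ≠ 0) (h : Fin m → F[X]) (h0 : ∀ j, ∑ i, h i * v i j = 0) : h = 0 := by
  have key : ∀ e : ℕ, (∀ i, Lt (e - k i) (h i)) → h = 0 := by
    intro e
    induction e with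
    | zero => intro H; funext i; exact Lt.eq_zero ((H i).mono (by omega))
    | succ e ih =>
      intro H
      apply ih
      set a : Fin m → F := fun i => if k i ≤ e then (h i).coeff (e - k i) else 0 with ha
      have : Matrix.vecMul a (lead k v) = 0 := by
        funext j
        have := congrArg (fun f => coeff f e) (h0 j)
        simp only [finsetSum_coeff, coeff_zero] at this
        rw [Pi.zero_apply, ← this]
        simp only [Matrix.vecMul, dotProduct, lead, Matrix.of_apply]
        refine Finset.sum_congr rfl fun i _ => ?_
        rw [coeff_top (H i) (hv i j)]
      have ha0 := Matrix.eq_zero_of_vecMul_eq_zero hL this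
      intro i n hn
      by_cases hk : k i ≤ e
      · rcases hn.lt_or_eq with hn | hn
        · exact H i n (by omega)
        · have := congrFun ha0 i
          simp only [ha, hk, if_true, Pi.zero_apply] at this
          rw [← hn]; exact this
      · exact H i n (by omega)
  choose a ha using fun i => Lt.exists (h i)
  refine key (∑ i, (a i + k i)) fun i => (ha i).mono ?_
  have := Finset.single_le_sum (f := fun i => a i + k i) (fun i _ => Nat.zero_le _) (Finset.mem_univ i)
  omega

lemma exists_reduced (K : Submodule F[X] (Fin m → F[X])) (p : F[X]) (hp : p.Monic)
    (hpK : ∀ i, (Pi.single i p : Fin m → F[X]) ∈ K) :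
    ∃ (k : Fin m → ℕ) (v : Fin m → Fin m → F[X]), (∀ i, v i ∈ K) ∧
      (∀ i j, Lt (k i + 1) (v i j)) ∧ (lead k v).det ≠ 0 ∧
      ∀ d (f : Fin m → F[X]), f ∈ K → (∀ j, Lt d (f j)) →
        ∃ h : Fin m → F[X], (∀ i, Lt (d - k i) (h i)) ∧ ∀ j, f j = ∑ i, h i * v i j := by
  classical
  let P : ℕ → Prop := fun n => ∃ (k : Fin m → ℕ) (v : Fin m → Fin m → F[X]), (∀ i, v i ∈ K) ∧
      (∀ i j, Lt (k i + 1) (v i j)) ∧ (lead k v).det ≠ 0 ∧ ∑ i, k i = n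
  have hP : ∃ n, P n := by
    refine ⟨_, fun _ => p.natDegree, fun i => Pi.single i p, hpK, ?_, ?_, rfl⟩
    · intro i j
      by_cases hij : j = i
      · subst hij; simpa using lt_of_natDegree (Nat.lt_succ_self _)
      · simpa [hij] using Lt.zero _
    · have : lead (fun _ => p.natDegree) (fun i => (Pi.single i p : Fin m → F[X])) = 1 := by
        ext i j
        by_cases hij : i = j
        · subst hij; simp [lead, hp]
        · simp [lead, hij, Pi.single_apply, Ne.symm hij]
      rw [this]; simp
  obtain ⟨k, v, hvK, hv, hL, hk⟩ := Nat.find_spec hP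
  have hmin : ∀ n, n < Nat.find hP → ¬ P n := fun n hn => Nat.find_min hP hn
  refine ⟨k, v, hvK, hv, hL, ?_⟩
  intro d
  induction d with
  | zero => 
    intro f _ hf
    exact ⟨0, fun i => Lt.zero _, fun j => by simpa using (hf j).eq_zero⟩
  | succ d ih =>
    intro f hfK hf
    set a : Fin m → F := Matrix.vecMul (fun j => (f j).coeff d) (lead k v)⁻¹ with ha
    have haL : Matrix.vecMul a (lead k v) = fun j => (f j).coeff d := by
      rw [ha, Matrix.vecMul_vecMul, Matrix.nonsing_inv_mul _ (isUnit_iff_ne_zero.2 hL),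
        Matrix.vecMul_one]
    have hsmall : ∀ i, a i ≠ 0 → k i ≤ d := by
      intro i hi
      by_contra hlt
      push Not at hlt
      refine hmin (∑ l, Function.update k i d l) ?_ ⟨Function.update k i d, Function.update v i f, ?_, ?_, ?_, rfl⟩
      · rw [← hk]
        apply Finset.sum_lt_sum
        · intro l _
          by_cases hl : l = i
          · subst hl; simpa using hlt.le
          · simp [hl]
        · exact ⟨i, Finset.mem_univ _, by simpa using hlt⟩
      · intro l
        by_cases hl : l = i
        · subst hl; simpa using hfK
        · simpa [hl] using hvK l
      · intro l j
        by_cases hl : l = i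
        · subst hl; simpa using hf j
        · simpa [hl] using hv l j
      · have : lead (Function.update k i d) (Function.update v i f) =
            (lead k v).updateRow i (∑ l, a l • (lead k v) l) := by
          ext l j
          by_cases hl : l = i
          · subst hl
            have := congrFun haL j
            simp only [Matrix.vecMul, dotProduct] at this
            simp [lead, Matrix.updateRow_self, ← this]
          · simp [lead, hl]
        rw [this, Matrix.det_updateRow_sum]
        exact mul_ne_zero hi hL
    set h0 : Fin m → F[X] := fun i => if k i ≤ d then C (a i) * X ^ (d - k i) else 0 with hh0
    have h0lt : ∀ i, Lt (d + 1 - k i) (h0 i) := by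
      intro i
      simp only [hh0]
      split_ifs with hki
      · intro n hn; rw [coeff_C_mul_X_pow, if_neg (by omega)]
      · exact Lt.zero _
    have hsum : ∑ i, h0 i • v i ∈ K := K.sum_mem fun i _ => K.smul_mem _ (hvK i)
    obtain ⟨h, hh, hfh⟩ := ih (f - ∑ i, h0 i • v i) (K.sub_mem hfK hsum) (by
      intro j n hn
      have e1 : (f - ∑ i, h0 i • v i) j = f j - ∑ i, h0 i * v i j := by simp
      rw [e1]
      rcases hn.lt_or_eq with hn | hn
      · exact (hf j).sub (sum_Lt hv h0lt j) n hn
      · subst hn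
        rw [coeff_sub, finsetSum_coeff, ← congrFun haL j, sub_eq_zero]
        simp only [Matrix.vecMul, dotProduct, lead, Matrix.of_apply]
        refine Finset.sum_congr rfl fun i _ => ?_
        rw [coeff_top (h0lt i) (hv i j)]
        congr 1
        by_cases hki : k i ≤ d
        · simp [hh0, hki]
        · simp only [hki, if_false]
          by_contra hne
          exact hki (hsmall i hne))
    refine ⟨h + h0, fun i => ((hh i).mono (by omega)).add (h0lt i), fun j => ?_⟩
    have := hfh j
    simp only [Pi.sub_apply, Finset.sum_apply, Pi.smul_apply, smul_eq_mul] at this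
    simp only [Pi.add_apply, add_mul, Finset.sum_add_distrib, ← this]
    ring

lemma red_div {k : Fin m → ℕ} {v : Fin m → Fin m → F[X]} (hv : ∀ i j, Lt (k i + 1) (v i j))
    (hL : (lead k v).det ≠ 0) (y : Fin m → F[X]) :
    ∃ t : Fin m → F[X], ∀ i, Lt (k i) (y i - ∑ j, v i j * t j) := by
  have key : ∀ e : ℕ, ∀ y : Fin m → F[X], (∀ i, Lt (k i + e) (y i)) →
      ∃ t : Fin m → F[X], ∀ i, Lt (k i) (y i - ∑ j, v i j * t j) := by
    intro e
    induction e with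
    | zero => intro y hy; exact ⟨0, by simpa using hy⟩
    | succ e ih =>
      intro y hy
      set a : Fin m → F := fun i => (y i).coeff (k i + e)
      set b : Fin m → F := Matrix.mulVec (lead k v)⁻¹ a with hb
      have hab : Matrix.mulVec (lead k v) b = a := by
        rw [hb, Matrix.mulVec_mulVec, Matrix.mul_nonsing_inv _ (isUnit_iff_ne_zero.2 hL),
          Matrix.one_mulVec]
      obtain ⟨t, ht⟩ := ih (fun i => y i - ∑ j, v i j * (C (b j) * X ^ e)) (by
        intro i n hn
        rw [coeff_sub, finsetSum_coeff]
        rcases hn.lt_or_eq with hn | hn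
        · rw [hy i n (by omega), zero_sub, neg_eq_zero]
          refine Finset.sum_eq_zero fun j _ => ?_
          rw [← mul_assoc, coeff_mul_X_pow']
          split_ifs
          · rw [coeff_mul_C, hv i j _ (by omega), zero_mul]
          · rfl
        · subst hn
          rw [sub_eq_zero]
          have := congrFun hab i
          simp only [Matrix.mulVec, dotProduct, lead, Matrix.of_apply] at this
          rw [show (y i).coeff (k i + e) = a i from rfl, ← this]
          refine Finset.sum_congr rfl fun j _ => ?_
          rw [← mul_assoc, coeff_mul_X_pow, coeff_mul_C])
      refine ⟨fun j => t j + C (b j) * X ^ e, fun i => ?_⟩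
      have := ht i
      convert this using 1
      simp only [mul_add, Finset.sum_add_distrib]
      ring
  choose a ha using fun i => Lt.exists (y i)
  refine key (∑ i, a i) y fun i => (ha i).mono ?_
  have := Finset.single_le_sum (f := fun i => a i) (fun i _ => Nat.zero_le _) (Finset.mem_univ i)
  omega

end B1
end SplitAux

namespace SplitAux
open Polynomial

section B2
variable {F : Type*} [Field F]

lemma mem_degreeLT_iff_Lt {d : ℕ} {f : F[X]} : f ∈ degreeLT F d ↔ Lt d f := by
  rw [mem_degreeLT, degree_lt_iff_coeff_zero]; rfl

noncomputable def ltEquiv (F : Type*) [Field F] (d : ℕ) : {f : F[X] // Lt d f} ≃ (Fin d → F) :=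
  (Equiv.subtypeEquivRight fun _ => mem_degreeLT_iff_Lt.symm).trans (degreeLTEquiv F d).toEquiv

instance [Finite F] (d : ℕ) : Finite {f : F[X] // Lt d f} := Finite.of_equiv _ (ltEquiv F d).symm

lemma card_Lt [Finite F] (d : ℕ) : Nat.card {f : F[X] // Lt d f} = Nat.card F ^ d := by
  rw [Nat.card_congr (ltEquiv F d), Nat.card_fun, Nat.card_fin]

lemma Lt.of_monic_mul {p g : F[X]} (hp : p.Monic) {d : ℕ} (h : Lt d (p * g)) :
    Lt (d - p.natDegree) g := by
  by_cases hg : g = 0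
  · rw [hg]; exact Lt.zero _
  have hne : p * g ≠ 0 := mul_ne_zero hp.ne_zero hg
  apply lt_of_natDegree
  have h1 : (p * g).natDegree < d := by
    by_contra hlt
    exact hne (leadingCoeff_eq_zero.1 (h _ (not_lt.1 hlt)))
  rw [natDegree_mul hp.ne_zero hg] at h1
  omega

lemma Lt.monic_mul {p g : F[X]} {d : ℕ} (hpd : p.natDegree ≤ d)
    (h : Lt (d - p.natDegree) g) : Lt d (p * g) := by
  rw [mul_comm]
  exact (h.mul (lt_of_natDegree (Nat.lt_succ_self p.natDegree))).mono (by omega)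

lemma exists_annih {V : Type*} [AddCommGroup V] [Module F[X] V] [Finite V] (w : V) :
    ∃ p : F[X], p.Monic ∧ ∀ g : F[X], g • w = 0 ↔ p ∣ g := by
  classical
  set I : Ideal F[X] := LinearMap.ker (LinearMap.toSpanSingleton F[X] V w) with hI
  obtain ⟨p0, hp0⟩ := (IsPrincipalIdealRing.principal I).principal
  have hmem : ∀ g : F[X], g • w = 0 ↔ p0 ∣ g := by
    intro g
    rw [← Ideal.mem_span_singleton]
    have : g ∈ I ↔ g • w = 0 := by simp [hI]
    rw [← this, hp0]
  have hne : p0 ≠ 0 := by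
    intro h0
    have : Function.Injective (fun g : F[X] => g • w) := by
      intro a b hab
      have : (a - b) • w = 0 := by rw [sub_smul]; exact sub_eq_zero.2 hab
      rw [hmem, h0, zero_dvd_iff] at this
      exact sub_eq_zero.1 this
    exact not_finite_iff_infinite.2 inferInstance (Finite.of_injective _ this)
  refine ⟨normalize p0, monic_normalize hne, fun g => ?_⟩
  rw [hmem, normalize_dvd_iff]

/-- the functional: top coefficient of the remainder -/
noncomputable def lam (p g : F[X]) : F := (g %ₘ p).coeff (p.natDegree - 1)

lemma lam_add (p g h : F[X]) : lam p (g + h) = lam p g + lam p h := by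
  simp [lam, add_modByMonic]

lemma lam_sum (p : F[X]) {ι : Type*} (s : Finset ι) (g : ι → F[X]) :
    lam p (∑ i ∈ s, g i) = ∑ i ∈ s, lam p (g i) := by
  classical
  induction s using Finset.induction_on with
  | empty => simp [lam]
  | insert a s ha ih => rw [Finset.sum_insert ha, Finset.sum_insert ha, lam_add, ih]

lemma lam_C_mul (p g : F[X]) (a : F) : lam p (C a * g) = a * lam p g := by
  simp [lam, ← smul_eq_C_mul, smul_modByMonic]

lemma lam_congr {p g h : F[X]} (hp : p.Monic) (hgh : p ∣ g - h) : lam p g = lam p h := by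
  have e := (modByMonic_eq_zero_iff_dvd hp).2 hgh
  rw [sub_modByMonic] at e
  rw [lam, lam, sub_eq_zero.1 e]

lemma mod_self {p g : F[X]} (hp : p.Monic) (h : Lt p.natDegree g) : g %ₘ p = g := by
  rw [modByMonic_eq_self_iff hp, degree_eq_natDegree hp.ne_zero, degree_lt_iff_coeff_zero]
  exact h

lemma Lt_X_pow_mul {d j : ℕ} {g : F[X]} (h : Lt d g) : Lt (d + j) (X ^ j * g) := by
  intro n hn
  rw [coeff_X_pow_mul', if_pos (by omega)]
  exact h _ (by omega)

lemma lam_criterion {p : F[X]} (hp : p.Monic) (d : ℕ) (g : F[X]) :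
    (∃ g', Lt d g' ∧ p ∣ g - g') ↔ ∀ j, j + d < p.natDegree → lam p (X ^ j * g) = 0 := by
  constructor
  · rintro ⟨g', hg', hd⟩ j hj
    rw [lam_congr hp (h := X ^ j * g') (by rw [← mul_sub]; exact hd.mul_left _)]
    have := Lt_X_pow_mul (j := j) hg'
    rw [lam, mod_self hp (this.mono (by omega))]
    exact this _ (by omega)
  · intro H
    have hdvd : p ∣ g - g %ₘ p := by
      rw [modByMonic_eq_sub_mul_div g p]
      exact ⟨g /ₘ p, by ring⟩
    refine ⟨g %ₘ p, ?_, hdvd⟩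
    set ρ := g %ₘ p with hρ
    have hρlt : Lt p.natDegree ρ := by
      have h1 := degree_modByMonic_lt g hp
      rw [degree_eq_natDegree hp.ne_zero, degree_lt_iff_coeff_zero] at h1
      exact h1
    have key : ∀ j, j + d ≤ p.natDegree → Lt (p.natDegree - j) ρ := by
      intro j
      induction j with
      | zero => intro _; simpa using hρlt
      | succ j ih =>
        intro hj n hn
        have ih' := ih (by omega)
        rcases hn.lt_or_eq with hn | hn
        · exact ih' n (by omega)
        · have h0 := H j (by omega)
          rw [lam_congr hp (h := X ^ j * ρ) (by rw [← mul_sub]; exact hdvd.mul_left _)] at h0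
          have := Lt_X_pow_mul (j := j) ih'
          rw [lam, mod_self hp (this.mono (by omega)), coeff_X_pow_mul', if_pos (by omega)] at h0
          rw [← h0]; congr 1; omega
    by_cases hd : d ≤ p.natDegree
    · exact (key (p.natDegree - d) (by omega)).mono (by omega)
    · exact hρlt.mono (by omega)

lemma lam_surj {p : F[X]} (hp : p.Monic) (a : ℕ → F) :
    ∃ g : F[X], ∀ j, j < p.natDegree → lam p (X ^ j * g) = a j := by
  let Λ : degreeLT F p.natDegree →ₗ[F] (Fin p.natDegree → F) :=
    { toFun := fun g j => lam p (X ^ (j : ℕ) * (g : F[X]))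
      map_add' := fun g h => by funext j; simp [mul_add, lam_add]
      map_smul' := fun r g => by
        funext j
        simp only [Submodule.coe_smul, smul_eq_C_mul, RingHom.id_apply, Pi.smul_apply, smul_eq_mul]
        rw [← lam_C_mul]; ring_nf }
  have hinj : Function.Injective Λ := by
    rw [← LinearMap.ker_eq_bot, LinearMap.ker_eq_bot']
    intro g hg
    obtain ⟨g', hg', hd⟩ := (lam_criterion hp 0 (g : F[X])).2 fun j hj => by
      exact congrFun hg ⟨j, by omega⟩
    rw [hg'.eq_zero, sub_zero] at hd
    have h1 := mod_self hp (mem_degreeLT_iff_Lt.1 g.2)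
    rw [(modByMonic_eq_zero_iff_dvd hp).2 hd] at h1
    exact Subtype.ext h1.symm
  have hsurj : Function.Surjective Λ := by
    have hfd : FiniteDimensional F (degreeLT F p.natDegree) :=
      LinearEquiv.finiteDimensional (degreeLTEquiv F p.natDegree).symm
    refine (LinearMap.injective_iff_surjective_of_finrank_eq_finrank ?_).1 hinj
    exact (degreeLTEquiv F p.natDegree).finrank_eq
  obtain ⟨g, hg⟩ := hsurj fun j => a j
  exact ⟨g, fun j hj => congrFun hg ⟨j, hj⟩⟩

lemma card_span [Finite F] {V : Type*} [AddCommGroup V] [Module F[X] V] {w : V} {p : F[X]}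
    (hp : p.Monic) (hw : ∀ g : F[X], g • w = 0 ↔ p ∣ g) :
    Nat.card (Submodule.span F[X] {w}) = Nat.card F ^ p.natDegree := by
  rw [← card_Lt]
  symm
  refine Nat.card_congr (Equiv.ofBijective
    (fun g : {f : F[X] // Lt p.natDegree f} => (⟨g.1 • w, Submodule.smul_mem _ _
      (Submodule.mem_span_singleton_self w)⟩ : Submodule.span F[X] {w})) ⟨?_, ?_⟩)
  · rintro ⟨a, ha⟩ ⟨b, hb⟩ hab
    have h1 : a • w = b • w := congrArg Subtype.val hab
    have h2 : p ∣ a - b := by rw [← hw, sub_smul, h1, sub_self]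
    have h3 := mod_self hp (ha.sub hb)
    rw [(modByMonic_eq_zero_iff_dvd hp).2 h2] at h3
    exact Subtype.ext (sub_eq_zero.1 h3.symm)
  · rintro ⟨x, hx⟩
    obtain ⟨g, rfl⟩ := Submodule.mem_span_singleton.1 hx
    obtain ⟨g', hg', hd⟩ := (lam_criterion hp p.natDegree g).2 fun j hj => by omega
    refine ⟨⟨g', hg'⟩, Subtype.ext ?_⟩
    have := (hw _).2 hd
    rw [sub_smul, sub_eq_zero] at this
    exact this.symm

/-- coefficient expansion of the functional -/
lemma lam_mul_expand (p h g : F[X]) (j d : ℕ) (hh : Lt d h) :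
    lam p (X ^ j * (h * g)) = ∑ t ∈ Finset.range d, h.coeff t * lam p (X ^ (j + t) * g) := by
  have e : h = ∑ t ∈ Finset.range d, C (h.coeff t) * X ^ t := by
    ext n
    rw [finsetSum_coeff]
    simp only [coeff_C_mul_X_pow]
    by_cases hn : n < d
    · rw [Finset.sum_eq_single n] <;> simp +contextual [hn, eq_comm]
    · rw [hh n (by omega), Finset.sum_eq_zero]
      intro t ht
      rw [if_neg]; have := Finset.mem_range.1 ht; omega
  conv_lhs => rw [e]
  rw [Finset.sum_mul, Finset.mul_sum, lam_sum]
  refine Finset.sum_congr rfl fun t _ => ?_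
  rw [← lam_C_mul]; ring_nf

end B2
end SplitAux

namespace SplitAux
open Polynomial

section B3
variable {F : Type*} [Field F]

/-- number of relations of degree `< d` among the entries of `w`. -/
noncomputable def kap (F : Type*) [Field F] {V : Type*} [AddCommGroup V] [Module F[X] V] {m : ℕ} (w : Fin m → V)
    (d : ℕ) : ℕ :=
  Nat.card {f : Fin m → F[X] // (∀ i, Lt d (f i)) ∧ ∑ i, f i • w i = 0}

/-- the universal count -/
noncomputable def Psi {m : ℕ} (c : ℕ) (k : Fin m → ℕ) (y : Fin m → ℕ → F) (d : ℕ) : ℕ :=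
  Nat.card {h : Fin m → F[X] // (∀ i, Lt (d - k i) (h i)) ∧
    ∀ j, j + d < c → ∑ i, ∑ t ∈ Finset.range (d - k i), (h i).coeff t * y i (j + t) = 0}
  * Nat.card F ^ (d - c)

lemma Psi_congr {m : ℕ} (c : ℕ) (k : Fin m → ℕ) (y y' : Fin m → ℕ → F) (d : ℕ)
    (hy : ∀ i j, j < c - k i → y i j = y' i j) : Psi c k y d = Psi c k y' d := by
  unfold Psi
  congr 1
  refine Nat.card_congr (Equiv.subtypeEquivRight fun h => and_congr_right fun _ => ?_)
  refine forall_congr' fun j => imp_congr_right fun hj => ?_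
  have : ∑ i, ∑ t ∈ Finset.range (d - k i), (h i).coeff t * y i (j + t) =
    ∑ i, ∑ t ∈ Finset.range (d - k i), (h i).coeff t * y' i (j + t) := by
    refine Finset.sum_congr rfl fun i _ => Finset.sum_congr rfl fun t ht => ?_
    have := Finset.mem_range.1 ht
    rw [hy i (j + t) (by omega)]
  rw [this]

variable {V : Type*} [AddCommGroup V] [Module F[X] V]

lemma kap_cons [Finite F] {m : ℕ} (w : V) (u : Fin m → V) {p : F[X]} (hp : p.Monic)
    (hw : ∀ g : F[X], g • w = 0 ↔ p ∣ g) (k : Fin m → ℕ) (v : Fin m → Fin m → F[X])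
    (hv : ∀ i j, Lt (k i + 1) (v i j)) (hL : (lead k v).det ≠ 0)
    (hspan : ∀ d (f : Fin m → F[X]), ∑ j, f j • u j ∈ Submodule.span F[X] {w} →
      (∀ j, Lt d (f j)) →
        ∃ h : Fin m → F[X], (∀ i, Lt (d - k i) (h i)) ∧ ∀ j, f j = ∑ i, h i * v i j)
    (G : Fin m → F[X]) (hG : ∀ i, ∑ j, v i j • u j = G i • w) (d : ℕ) :
    kap F (Fin.cons w u : Fin (m+1) → V) d =
      Psi p.natDegree k (fun i j => lam p (X ^ j * G i)) d := by
  have hcrit : ∀ h : Fin m → F[X], (∀ i, Lt (d - k i) (h i)) →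
      ((∀ j, j + d < p.natDegree → ∑ i, ∑ t ∈ Finset.range (d - k i),
        (h i).coeff t * lam p (X ^ (j + t) * G i) = 0) ↔
        ∃ g', Lt d g' ∧ p ∣ ∑ i, h i * G i - g') := by
    intro h hh
    rw [lam_criterion hp]
    refine forall_congr' fun j => imp_congr_right fun hj => ?_
    rw [Finset.mul_sum, lam_sum]
    rw [Finset.sum_congr rfl fun i _ => lam_mul_expand p (h i) (G i) j _ (hh i)]
  have hsum : ∀ h : Fin m → F[X], ∑ j, (∑ i, h i * v i j) • u j = (∑ i, h i * G i) • w := by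
    intro h
    simp only [Finset.sum_smul, mul_smul]
    rw [Finset.sum_comm]
    refine Finset.sum_congr rfl fun i _ => ?_
    rw [← Finset.smul_sum, hG]
  unfold Psi kap
  rw [← card_Lt, ← Nat.card_prod]
  symm
  let H := {h : Fin m → F[X] // (∀ i, Lt (d - k i) (h i)) ∧
    ∀ j, j + d < p.natDegree → ∑ i, ∑ t ∈ Finset.range (d - k i),
      (h i).coeff t * lam p (X ^ (j + t) * G i) = 0}
  choose g0 hg0 using fun h : H => (hcrit h.1 h.2.1).1 h.2.2
  have hg0' : ∀ h : H, (∑ i, h.1 i * G i) • w = g0 h • w := fun h => by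
    have := (hw _).2 (hg0 h).2
    rwa [sub_smul, sub_eq_zero] at this
  have hpg : ∀ g : {f : F[X] // Lt (d - p.natDegree) f}, Lt d (p * g.1) := by
    intro g
    by_cases hpd : p.natDegree ≤ d
    · exact g.2.monic_mul hpd
    · have : g.1 = 0 := Lt.eq_zero (g.2.mono (by omega))
      rw [this, mul_zero]; exact Lt.zero _
  refine Nat.card_congr (Equiv.ofBijective (fun hg : H × {f : F[X] // Lt (d - p.natDegree) f} =>
    (⟨Fin.cons (p * hg.2.1 - g0 hg.1) (fun j => ∑ i, hg.1.1 i * v i j), ?_, ?_⟩ :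
      {f : Fin (m+1) → F[X] // (∀ i, Lt d (f i)) ∧
        ∑ i, f i • (Fin.cons w u : Fin (m+1) → V) i = 0})) ⟨?_, ?_⟩)
  · intro i
    refine Fin.cases ?_ (fun j => ?_) i
    · simpa using (hpg hg.2).sub (hg0 hg.1).1
    · simpa using sum_Lt hv hg.1.2.1 j
  · rw [Fin.sum_univ_succ]
    simp only [Fin.cons_zero, Fin.cons_succ]
    rw [hsum, hg0' hg.1, sub_smul, (hw _).2 (dvd_mul_right _ _)]
    simp
  · rintro ⟨h, g⟩ ⟨h', g'⟩ heq
    have e := congrArg Subtype.val heq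
    simp only at e
    have e0 := congrFun e 0
    have e1 : ∀ j, ∑ i, h.1 i * v i j = ∑ i, h'.1 i * v i j := fun j => by
      simpa using congrFun e j.succ
    have hh : h = h' := by
      apply Subtype.ext
      have := red_unique hv hL (h.1 - h'.1) fun j => by
        simp [sub_mul, Finset.sum_sub_distrib, e1 j]
      exact sub_eq_zero.1 this
    subst hh
    simp only [Fin.cons_zero, sub_left_inj] at e0
    exact Prod.ext rfl (Subtype.ext (mul_left_cancel₀ hp.ne_zero e0))
  · rintro ⟨f, hf, hf0⟩
    rw [Fin.sum_univ_succ] at hf0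
    simp only [Fin.cons_zero, Fin.cons_succ] at hf0
    have hmem : ∑ j : Fin m, f j.succ • u j ∈ Submodule.span F[X] {w} := by
      rw [eq_neg_iff_add_eq_zero.2 (by rwa [add_comm] at hf0 : ∑ j : Fin m, f j.succ • u j + f 0 • w = 0)]
      exact Submodule.neg_mem _ (Submodule.smul_mem _ _ (Submodule.mem_span_singleton_self w))
    obtain ⟨h, hh, hfh⟩ := hspan d (fun j => f j.succ) hmem fun j => hf _
    have hz : f 0 • w + (∑ i, h i * G i) • w = 0 := by
      rw [← hf0, ← hsum]
      congr 1
      exact Finset.sum_congr rfl fun j _ => by rw [hfh j]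
    let hH : H := ⟨h, hh, (hcrit h hh).2 ⟨-f 0, fun n hn => by rw [coeff_neg, hf 0 n hn, neg_zero], by
      rw [← hw, sub_neg_eq_add, add_smul, add_comm]; exact hz⟩⟩
    have hd : p ∣ f 0 + g0 hH := by
      rw [← hw, add_smul, ← hg0']; exact hz
    obtain ⟨g, hg⟩ := hd
    refine ⟨(hH, ⟨g, Lt.of_monic_mul hp (by rw [← hg]; exact (hf 0).add (hg0 hH).1)⟩), ?_⟩
    apply Subtype.ext
    funext i
    refine Fin.cases ?_ (fun j => ?_) i
    · simp [← hg]
    · simpa using (hfh j).symm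

end B3
end SplitAux

namespace SplitAux
open Polynomial

section B4

lemma fiber_equiv {A B C : Type*} [Finite A] [Finite B] (f : A → C) (g : B → C)
    (h : ∀ c, Nat.card {a // f a = c} = Nat.card {b // g b = c}) :
    ∃ E : A ≃ B, ∀ a, g (E a) = f a := by
  have e : ∀ c, {a // f a = c} ≃ {b // g b = c} := fun c => Classical.choice (Finite.card_eq.1 (h c))
  refine ⟨(Equiv.sigmaFiberEquiv f).symm.trans ((Equiv.sigmaCongrRight e).trans
    (Equiv.sigmaFiberEquiv g)), fun a => ?_⟩
  exact (e (f a) ⟨a, rfl⟩).2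

lemma fiber_card {A B : Type*} [AddCommGroup A] [AddCommGroup B] [Finite A] (φ : A →+ B)
    (hφ : Function.Surjective φ) (y : B) :
    Nat.card {x // φ x = y} * Nat.card B = Nat.card A := by
  obtain ⟨x0, hx0⟩ := hφ y
  have e1 : Nat.card {x // φ x = y} = Nat.card φ.ker := by
    refine Nat.card_congr ⟨fun x => ⟨x.1 - x0, ?_⟩, fun x => ⟨x.1 + x0, ?_⟩, ?_, ?_⟩
    · rw [AddMonoidHom.mem_ker, map_sub, x.2, hx0, sub_self]
    · rw [map_add, hx0, AddMonoidHom.mem_ker.1 x.2, zero_add]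
    · intro x; simp
    · intro x; simp
  have e2 : Nat.card (A ⧸ φ.ker) = Nat.card B :=
    Nat.card_congr (QuotientAddGroup.quotientKerEquivOfSurjective φ hφ).toEquiv
  rw [e1, ← e2, mul_comm, ← AddSubgroup.card_eq_card_quotient_mul_card_addSubgroup]

lemma perm_of_sums {m : ℕ} (k k' : Fin m → ℕ) (h : ∀ d, ∑ i, (d - k i) = ∑ i, (d - k' i)) :
    ∃ π : Fin m ≃ Fin m, ∀ i, k' (π i) = k i := by
  apply fiber_equiv
  have key : ∀ (k : Fin m → ℕ) (n : ℕ), Nat.card {i // k i = n} + 2 * ∑ i, (n - k i) =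
      ∑ i, (n + 1 - k i) + ∑ i, (n - 1 - k i) := by
    intro k n
    rw [Nat.card_eq_fintype_card, Fintype.card_subtype, Finset.card_filter, Finset.mul_sum,
      ← Finset.sum_add_distrib, ← Finset.sum_add_distrib]
    refine Finset.sum_congr rfl fun i _ => ?_
    split_ifs <;> omega
  intro n
  have h1 := key k n
  have h2 := key k' n
  rw [h, h, h] at h1
  omega

variable {F : Type*} [Field F]

/-- reduced data for the relation lattice of `w` -/
structure Red {V : Type*} [AddCommGroup V] [Module F[X] V] {m : ℕ} (w : Fin m → V)
    (k : Fin m → ℕ) (v : Fin m → Fin m → F[X]) : Prop where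
  rel : ∀ i, ∑ j, v i j • w j = 0
  lt : ∀ i j, Lt (k i + 1) (v i j)
  det : (lead k v).det ≠ 0
  span : ∀ d (f : Fin m → F[X]), ∑ j, f j • w j = 0 → (∀ j, Lt d (f j)) →
    ∃ h : Fin m → F[X], (∀ i, Lt (d - k i) (h i)) ∧ ∀ j, f j = ∑ i, h i * v i j

variable {V : Type*} [AddCommGroup V] [Module F[X] V]

lemma exists_red [Finite V] {m : ℕ} (w : Fin m → V) : ∃ k v, Red (F := F) w k v := by
  classical
  choose p hp hpw using fun i => exists_annih (F := F) (w i)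
  let K : Submodule F[X] (Fin m → F[X]) :=
    LinearMap.ker (∑ j, (LinearMap.toSpanSingleton F[X] V (w j)).comp (LinearMap.proj j))
  have hK : ∀ f, f ∈ K ↔ ∑ j, f j • w j = 0 := by
    intro f; simp [K]
  obtain ⟨k, v, h1, h2, h3, h4⟩ := exists_reduced K (∏ j, p j)
    (monic_prod_of_monic _ _ fun j _ => hp j) (fun i => by
      rw [hK]
      refine Finset.sum_eq_zero fun j _ => ?_
      by_cases hij : j = i
      · subst hij
        rw [Pi.single_eq_same, hpw]
        exact Finset.dvd_prod_of_mem _ (Finset.mem_univ _)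
      · simp [hij])
  exact ⟨k, v, fun i => (hK _).1 (h1 i), h2, h3, fun d f hf => h4 d f ((hK f).2 hf)⟩

lemma Red.reindex {m : ℕ} {w : Fin m → V} {k : Fin m → ℕ} {v : Fin m → Fin m → F[X]}
    (H : Red w k v) (π : Equiv.Perm (Fin m)) : Red w (k ∘ π) (v ∘ π) where
  rel i := H.rel (π i)
  lt i j := H.lt (π i) j
  det := by
    have : lead (k ∘ π) (v ∘ π) = (lead k v).submatrix π id := by ext i j; rfl
    rw [this, Matrix.det_permute]
    refine mul_ne_zero ?_ H.det
    rcases Int.units_eq_one_or (Equiv.Perm.sign π) with h | h <;> simp [h]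
  span d f hf hd := by
    obtain ⟨h, hh, hfh⟩ := H.span d f hf hd
    refine ⟨h ∘ π, fun i => hh (π i), fun j => ?_⟩
    rw [hfh j]
    exact (Equiv.sum_comp π fun i => h i * v i j).symm

lemma Red.kap_eq [Finite F] {m : ℕ} {w : Fin m → V} {k : Fin m → ℕ} {v : Fin m → Fin m → F[X]}
    (H : Red w k v) (d : ℕ) : kap F w d = Nat.card F ^ (∑ i, (d - k i)) := by
  have e : kap F w d = Nat.card ((i : Fin m) → {f : F[X] // Lt (d - k i) f}) := by
    symm
    refine Nat.card_congr (Equiv.ofBijective (fun h => ⟨fun j => ∑ i, (h i).1 * v i j,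
      fun j => sum_Lt H.lt (fun i => (h i).2) j, ?_⟩) ⟨?_, ?_⟩)
    · simp only [Finset.sum_smul, mul_smul]
      rw [Finset.sum_comm]
      refine Finset.sum_eq_zero fun i _ => ?_
      rw [← Finset.smul_sum, H.rel, smul_zero]
    · intro h h' heq
      have e := congrArg Subtype.val heq
      simp only at e
      have := red_unique H.lt H.det (fun i => (h i).1 - (h' i).1) fun j => by
        simp [sub_mul, Finset.sum_sub_distrib, congrFun e j]
      funext i
      exact Subtype.ext (sub_eq_zero.1 (congrFun this i))
    · rintro ⟨f, hf, hf0⟩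
      obtain ⟨h, hh, hfh⟩ := H.span d f hf0 hf
      exact ⟨fun i => ⟨h i, hh i⟩, Subtype.ext (funext fun j => (hfh j).symm)⟩
  rw [e, Nat.card_pi, ← Finset.prod_pow_eq_pow_sum]
  exact Finset.prod_congr rfl fun i _ => card_Lt _

/-- extension by zero -/
def ext0 {m c : ℕ} {k : Fin m → ℕ} (y : (i : Fin m) → Fin (c - k i) → F) (i : Fin m) (j : ℕ) : F :=
  if h : j < c - k i then y i ⟨j, h⟩ else 0

lemma exists_S {w : V} {p : F[X]} (hp : p.Monic) (hw : ∀ g : F[X], g • w = 0 ↔ p ∣ g) :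
    ∃ S : Submodule.span F[X] {w} →+ (ℕ → F),
      ∀ (x : Submodule.span F[X] {w}) (g : F[X]), (x : V) = g • w →
        ∀ j, S x j = lam p (X ^ j * g) := by
  choose rep hrep using fun x : Submodule.span F[X] {w} => Submodule.mem_span_singleton.1 x.2
  have hcong : ∀ (g h : F[X]) (j : ℕ), g • w = h • w → lam p (X ^ j * g) = lam p (X ^ j * h) := by
    intro g h j hgh
    apply lam_congr hp
    rw [← mul_sub]
    refine Dvd.dvd.mul_left ?_ _
    rw [← hw, sub_smul, hgh, sub_self]
  refine ⟨AddMonoidHom.mk' (fun x j => lam p (X ^ j * rep x)) ?_, ?_⟩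
  · intro a b
    funext j
    rw [Pi.add_apply, ← lam_add, ← mul_add]
    apply hcong
    rw [add_smul, hrep, hrep, hrep]; rfl
  · intro x g hx j
    apply hcong
    rw [hrep, hx]

lemma exists_theta [Finite F] [Finite V] {m : ℕ} {w : V} {p : F[X]} (hp : p.Monic)
    (hw : ∀ g : F[X], g • w = 0 ↔ p ∣ g) (M : Submodule F[X] V)
    (hM : M = Submodule.span F[X] {w}) (wb : Fin m → V ⧸ M)
    {k : Fin m → ℕ} {v : Fin m → Fin m → F[X]} (H : Red wb k v) :
    ∃ Θ : {u : Fin m → V // (fun i => (Submodule.Quotient.mk (u i) : V ⧸ M)) = wb} →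
        ((i : Fin m) → Fin (p.natDegree - k i) → F),
      (∀ y, Nat.card {u // Θ u = y} * Nat.card ((i : Fin m) → Fin (p.natDegree - k i) → F) =
        Nat.card M ^ m) ∧
      ∀ u d, kap F (Fin.cons w u.1 : Fin (m+1) → V) d = Psi p.natDegree k (ext0 (Θ u)) d := by
  obtain ⟨S, hS⟩ : ∃ S : M →+ (ℕ → F), ∀ (x : M) (g : F[X]), (x : V) = g • w →
        ∀ j, S x j = lam p (X ^ j * g) := by
    subst hM; exact exists_S hp hw
  have hwM : w ∈ M := hM ▸ Submodule.mem_span_singleton_self w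
  have hsum : ∀ (f : Fin m → F[X]) (u : Fin m → V), (fun i => (Submodule.Quotient.mk (u i) : V ⧸ M)) = wb →
      (∑ j, f j • u j ∈ M ↔ ∑ j, f j • wb j = 0) := by
    intro f u hu
    rw [← Submodule.Quotient.mk_eq_zero, ← hu]
    have : (Submodule.Quotient.mk (∑ j, f j • u j) : V ⧸ M) =
      ∑ j, f j • (Submodule.Quotient.mk (u j) : V ⧸ M) := by
      simp only [← Submodule.mkQ_apply, map_sum, map_smul]
    rw [this]
  have hmem : ∀ (u : {u : Fin m → V // (fun i => (Submodule.Quotient.mk (u i) : V ⧸ M)) = wb}) i,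
      ∑ j, v i j • u.1 j ∈ M := fun u i => (hsum _ u.1 u.2).2 (H.rel i)
  refine ⟨fun u i j => S ⟨_, hmem u i⟩ j, ?_, ?_⟩
  · intro y
    let A : (Fin m → M) →+ ((i : Fin m) → Fin (p.natDegree - k i) → F) :=
      AddMonoidHom.mk' (fun t i j => S (∑ l, v i l • t l) j) (by
        intro a b; funext i j
        simp [Finset.sum_add_distrib])
    have hA : Function.Surjective A := by
      intro z
      choose g hg using fun i => lam_surj hp (ext0 z i)
      obtain ⟨τ, hτ⟩ := red_div H.lt H.det g
      refine ⟨fun l => ⟨τ l • w, Submodule.smul_mem _ _ hwM⟩, ?_⟩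
      funext i j
      have hj := j.2
      change S _ _ = _
      rw [hS _ (∑ l, v i l * τ l) (by simp [Finset.sum_smul, mul_smul]) j]
      have h1 := (lam_criterion hp (k i) (g i - ∑ l, v i l * τ l)).1 ⟨_, hτ i, by simp⟩ j (by omega)
      have h2 : g i = (g i - ∑ l, v i l * τ l) + ∑ l, v i l * τ l := by ring
      have h3 := hg i j (by omega)
      rw [h2, mul_add, lam_add, h1, zero_add] at h3
      rw [h3]
      simp [ext0]
    have hcA := fiber_card A hA
    choose u0 hu0 using fun i => Submodule.Quotient.mk_surjective M (wb i)
    have hu0' : (fun i => (Submodule.Quotient.mk (u0 i) : V ⧸ M)) = wb := funext hu0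
    let y' : (i : Fin m) → Fin (p.natDegree - k i) → F :=
      y - fun i (j : Fin (p.natDegree - k i)) => S ⟨_, hmem ⟨u0, hu0'⟩ i⟩ j
    have hcard : Nat.card (Fin m → M) = Nat.card M ^ m := by
      rw [Nat.card_fun, Nat.card_fin]
    rw [← hcard, ← hcA y']
    congr 1
    have hAu : ∀ (t : Fin m → M) (u : {u : Fin m → V // (fun i => (Submodule.Quotient.mk (u i) : V ⧸ M)) = wb}),
        (∀ i, u.1 i = u0 i + t i) → (((fun i (j : Fin (p.natDegree - k i)) => S ⟨_, hmem u i⟩ j) = y) ↔ A t = y') := by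
      intro t u hu
      have : ∀ i, (⟨_, hmem u i⟩ : M) = ⟨_, hmem ⟨u0, hu0'⟩ i⟩ + ∑ l, v i l • t l := by
        intro i
        apply Subtype.ext
        simp [hu, Finset.sum_add_distrib]
      have h2 : (fun i (j : Fin (p.natDegree - k i)) => S ⟨_, hmem u i⟩ j) =
          (fun i (j : Fin (p.natDegree - k i)) => S ⟨_, hmem ⟨u0, hu0'⟩ i⟩ j) + A t := by
        funext i j
        rw [this i, map_add]; rfl
      rw [h2]
      simp only [y']
      rw [eq_sub_iff_add_eq, add_comm]
    have hdiff : ∀ u : {u : Fin m → V // (fun i => (Submodule.Quotient.mk (u i) : V ⧸ M)) = wb},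
        ∀ i, u.1 i - u0 i ∈ M := by
      intro u i
      rw [← Submodule.Quotient.eq, hu0 i]
      exact congrFun u.2 i
    refine Nat.card_congr ⟨fun u => ⟨fun i => ⟨u.1.1 i - u0 i, hdiff u.1 i⟩, ?_⟩,
      fun t => ⟨⟨fun i => u0 i + t.1 i, ?_⟩, ?_⟩, ?_, ?_⟩
    · exact (hAu _ u.1 (by intro i; simp)).1 u.2
    · funext i
      rw [← hu0 i, Submodule.Quotient.eq]
      simp
    · exact (hAu t.1 _ (by intro i; rfl)).2 t.2
    · intro u; apply Subtype.ext; apply Subtype.ext; funext i; simp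
    · intro t; apply Subtype.ext; funext i; apply Subtype.ext; simp
  · intro u d
    choose G hG using fun i => Submodule.mem_span_singleton.1 (hM.le (hmem u i))
    rw [kap_cons w u.1 hp hw k v H.lt H.det
      (fun d f hf hd => H.span d f ((hsum f u.1 u.2).1 (hM.ge hf)) hd) G (fun i => (hG i).symm) d]
    apply Psi_congr
    intro i j hj
    rw [ext0, dif_pos hj]
    exact (hS _ (G i) (hG i).symm j).symm

lemma key_lifts [Finite F] [Finite V] {V' : Type*} [AddCommGroup V'] [Module F[X] V'] [Finite V']
    {m : ℕ} (w : V) (w' : V')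
    (wb : Fin m → V ⧸ Submodule.span F[X] {w}) (wb' : Fin m → V' ⧸ Submodule.span F[X] {w'})
    (hc : Nat.card (Submodule.span F[X] {w}) = Nat.card (Submodule.span F[X] {w'}))
    (hk : kap F wb = kap F wb') :
    ∃ E : {u : Fin m → V // (fun i => (Submodule.Quotient.mk (u i) : V ⧸ Submodule.span F[X] {w})) = wb} ≃
      {u : Fin m → V' // (fun i => (Submodule.Quotient.mk (u i) : V' ⧸ Submodule.span F[X] {w'})) = wb'},
      ∀ u, kap F (Fin.cons w' (E u).1 : Fin (m+1) → V') = kap F (Fin.cons w u.1 : Fin (m+1) → V) := by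
  have hq : 1 < Nat.card F := Finite.one_lt_card
  obtain ⟨p, hp, hw⟩ := exists_annih (F := F) w
  obtain ⟨p', hp', hw'⟩ := exists_annih (F := F) w'
  have hdeg : p'.natDegree = p.natDegree := by
    have h1 := card_span hp hw
    have h2 := card_span hp' hw'
    rw [← hc, h1] at h2
    exact (Nat.pow_right_injective hq h2).symm
  have : Finite (V ⧸ Submodule.span F[X] {w}) :=
    Finite.of_surjective _ (Submodule.Quotient.mk_surjective _)
  have : Finite (V' ⧸ Submodule.span F[X] {w'}) :=
    Finite.of_surjective _ (Submodule.Quotient.mk_surjective _)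
  obtain ⟨k, v, H⟩ := exists_red (F := F) wb
  obtain ⟨k', v', H'⟩ := exists_red (F := F) wb'
  obtain ⟨π, hπ⟩ := perm_of_sums k k' fun d => by
    have := congrFun hk d
    rw [H.kap_eq, H'.kap_eq] at this
    exact Nat.pow_right_injective hq this
  have H'' := H'.reindex π
  rw [show k' ∘ π = k from funext hπ] at H''
  obtain ⟨Θ, h1, h2⟩ := exists_theta hp hw _ rfl wb H
  obtain ⟨Θ', h1', h2'⟩ := exists_theta hp' hw' _ rfl wb' H''
  revert Θ' h1' h2'
  rw [hdeg]
  intro Θ' h1' h2'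
  obtain ⟨E, hE⟩ := fiber_equiv Θ Θ' fun y => by
    have e := (h1 y).trans ((congrArg (· ^ m) hc).trans (h1' y).symm)
    exact Nat.eq_of_mul_eq_mul_right Nat.card_pos e
  refine ⟨E, fun u => ?_⟩
  funext d
  rw [h2, h2', hE]

end B4
end SplitAux

namespace SplitAux
open Polynomial

section B5
variable {F : Type*} [Field F]

lemma span_map_iff {V V' : Type*} [AddCommGroup V] [Module F[X] V]
    [AddCommGroup V'] [Module F[X] V'] (e : V ≃+ V')
    (H1 : ∀ (f : F[X]) v, ∃ g : F[X], e (f • v) = g • e v)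
    (H2 : ∀ (f : F[X]) v', ∃ g : F[X], e.symm (f • v') = g • e.symm v') (w x : V) :
    e x ∈ Submodule.span F[X] {e w} ↔ x ∈ Submodule.span F[X] {w} := by
  rw [Submodule.mem_span_singleton, Submodule.mem_span_singleton]
  constructor
  · rintro ⟨f, hf⟩
    obtain ⟨g, hg⟩ := H2 f (e w)
    refine ⟨g, ?_⟩
    rw [hf, e.symm_apply_apply, e.symm_apply_apply] at hg
    exact hg.symm
  · rintro ⟨f, hf⟩
    obtain ⟨g, hg⟩ := H1 f w
    exact ⟨g, by rw [← hg, hf]⟩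

lemma quot_equiv {V V' : Type*} [AddCommGroup V] [Module F[X] V]
    [AddCommGroup V'] [Module F[X] V'] (e : V ≃+ V')
    (H1 : ∀ (f : F[X]) v, ∃ g : F[X], e (f • v) = g • e v)
    (H2 : ∀ (f : F[X]) v', ∃ g : F[X], e.symm (f • v') = g • e.symm v')
    (M : Submodule F[X] V) (M' : Submodule F[X] V') (hM : ∀ x, e x ∈ M' ↔ x ∈ M) :
    ∃ eb : (V ⧸ M) ≃+ (V' ⧸ M'),
      (∀ (f : F[X]) v, ∃ g : F[X], eb (f • v) = g • eb v) ∧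
      (∀ (f : F[X]) v', ∃ g : F[X], eb.symm (f • v') = g • eb.symm v') := by
  let eb : (V ⧸ M) ≃+ (V' ⧸ M') :=
    QuotientAddGroup.congr M.toAddSubgroup M'.toAddSubgroup e (by
      ext x
      simp only [AddSubgroup.mem_map, Submodule.mem_toAddSubgroup]
      constructor
      · rintro ⟨y, hy, rfl⟩
        exact (hM y).2 hy
      · intro hx
        refine ⟨e.symm x, (hM _).1 (by simpa using hx), by simp⟩)
  have heb : ∀ v : V, eb (Submodule.Quotient.mk v) = Submodule.Quotient.mk (e v) := fun v => rfl
  refine ⟨eb, ?_, ?_⟩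
  · intro f v
    obtain ⟨v, rfl⟩ := Submodule.Quotient.mk_surjective M v
    obtain ⟨g, hg⟩ := H1 f v
    refine ⟨g, ?_⟩
    rw [← Submodule.Quotient.mk_smul, heb, heb, hg, Submodule.Quotient.mk_smul]
  · intro f v'
    obtain ⟨v', rfl⟩ := Submodule.Quotient.mk_surjective M' v'
    obtain ⟨g, hg⟩ := H2 f v'
    refine ⟨g, ?_⟩
    rw [AddEquiv.symm_apply_eq]
    have h1 : eb.symm (Submodule.Quotient.mk v') = Submodule.Quotient.mk (e.symm v') := by
      rw [AddEquiv.symm_apply_eq, heb, e.apply_symm_apply]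
    rw [h1, ← Submodule.Quotient.mk_smul, ← Submodule.Quotient.mk_smul, heb, ← hg, e.apply_symm_apply,
      Submodule.Quotient.mk_smul]

theorem main_bij [Finite F] (m : ℕ) : ∀ {V V' : Type*} [AddCommGroup V] [Module F[X] V]
    [AddCommGroup V'] [Module F[X] V'] [Finite V] [Finite V'] (e : V ≃+ V')
    (_ : ∀ (f : F[X]) v, ∃ g : F[X], e (f • v) = g • e v)
    (_ : ∀ (f : F[X]) v', ∃ g : F[X], e.symm (f • v') = g • e.symm v'),
    ∃ E : (Fin m → V) ≃ (Fin m → V'), ∀ w, kap F (E w) = kap F w := by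
  induction m with
  | zero =>
    intro V V' _ _ _ _ _ _ e _ _
    refine ⟨Equiv.arrowCongr (Equiv.refl _) e.toEquiv, fun w => ?_⟩
    funext d
    simp [kap]
  | succ m ih =>
    intro V V' _ _ _ _ _ _ e H1 H2
    have step : ∀ w : V, ∃ E : (Fin m → V) ≃ (Fin m → V'),
        ∀ u, kap F (Fin.cons (e w) (E u) : Fin (m+1) → V') = kap F (Fin.cons w u : Fin (m+1) → V) := by
      intro w
      have hM := span_map_iff e H1 H2 w
      have hc : Nat.card (Submodule.span F[X] {w}) = Nat.card (Submodule.span F[X] {e w}) :=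
        Nat.card_congr (e.toEquiv.subtypeEquiv fun x => (hM x).symm)
      obtain ⟨eb, K1, K2⟩ := quot_equiv e H1 H2 _ _ hM
      have : Finite (V ⧸ Submodule.span F[X] {w}) :=
        Finite.of_surjective _ (Submodule.Quotient.mk_surjective _)
      have : Finite (V' ⧸ Submodule.span F[X] {e w}) :=
        Finite.of_surjective _ (Submodule.Quotient.mk_surjective _)
      obtain ⟨Eb, hEb⟩ := ih eb K1 K2
      choose L hL using fun wb => key_lifts w (e w) wb (Eb wb) hc (hEb wb).symm
      refine ⟨(Equiv.sigmaFiberEquiv (fun (u : Fin m → V) i =>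
        (Submodule.Quotient.mk (u i) : V ⧸ Submodule.span F[X] {w}))).symm.trans
        ((Equiv.sigmaCongr Eb L).trans (Equiv.sigmaFiberEquiv (fun (u : Fin m → V') i =>
        (Submodule.Quotient.mk (u i) : V' ⧸ Submodule.span F[X] {e w})))), fun u => ?_⟩
      exact hL _ ⟨u, rfl⟩
    choose E hE using step
    refine ⟨(Fin.consEquiv fun _ => V).symm.trans ((Equiv.prodShear e.toEquiv E).trans
      (Fin.consEquiv fun _ => V')), fun w => ?_⟩
    have := hE (w 0) (Fin.tail w)
    rw [Fin.cons_self_tail] at this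
    exact this

end B5
end SplitAux

namespace SplitAux
open Polynomial

section B6
variable {F : Type*} [Field F] {V : Type*} [AddCommGroup V] [Module F V]

lemma kap_one_iff (T : V →ₗ[F] V) (m d : ℕ) (w : Fin m → V) :
    kap F (fun i => Module.AEval'.of T (w i)) d = 1 ↔
      LinearIndependent F (fun x : Fin d × Fin m => (T ^ (x.1 : ℕ)) (w x.2)) := by
  have hsm : ∀ f : Fin m → F[X], ∑ i, f i • Module.AEval'.of T (w i) = 0 ↔
      ∑ i, (aeval T (f i)) (w i) = 0 := by
    intro f
    have : ∑ i, f i • Module.AEval'.of T (w i) = Module.AEval'.of T (∑ i, (aeval T (f i)) (w i)) := by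
      rw [map_sum]; rfl
    rw [this, LinearEquiv.map_eq_zero_iff]
  have hex : ∀ g : Fin d × Fin m → F, ∑ i, (aeval T (∑ j : Fin d, C (g (j, i)) * X ^ (j : ℕ))) (w i) =
      ∑ x, g x • (T ^ (x.1 : ℕ)) (w x.2) := by
    intro g
    rw [Fintype.sum_prod_type_right]
    refine Finset.sum_congr rfl fun i _ => ?_
    rw [map_sum, LinearMap.sum_apply]
    refine Finset.sum_congr rfl fun j _ => ?_
    simp [Module.algebraMap_end_apply]
  have hcoeff : ∀ (g : Fin d → F) (n : ℕ), (∑ j : Fin d, C (g j) * X ^ (j : ℕ)).coeff n =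
      if h : n < d then g ⟨n, h⟩ else 0 := by
    intro g n
    simp only [finsetSum_coeff, coeff_C_mul, coeff_X_pow]
    split_ifs with h
    · rw [Finset.sum_eq_single ⟨n, h⟩]
      · simp
      · intro b _ hb
        rw [if_neg, mul_zero]
        intro h'; apply hb; apply Fin.ext; exact h'.symm
      · simp
    · refine Finset.sum_eq_zero fun j _ => ?_
      rw [if_neg, mul_zero]
      have := j.2
      omega
  rw [kap, Nat.card_eq_one_iff_unique, Fintype.linearIndependent_iff]
  constructor
  · rintro ⟨hs, -⟩ g hg x
    have h0 := hs.elim ⟨fun i => ∑ j : Fin d, C (g (j, i)) * X ^ (j : ℕ), fun i n hn => by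
      rw [hcoeff, dif_neg (by omega)], (hsm _).2 ((hex g).trans hg)⟩ ⟨0, fun i n hn => by simp, by simp⟩
    have h1 := congrArg (fun f => coeff (f x.2) x.1) (congrArg Subtype.val h0)
    simp only [hcoeff] at h1
    simpa using h1
  · intro hli
    refine ⟨⟨?_⟩, ⟨⟨0, fun i n hn => by simp, by simp⟩⟩⟩
    have key : ∀ f : Fin m → F[X], (∀ i, Lt d (f i)) → ∑ i, f i • Module.AEval'.of T (w i) = 0 → f = 0 := by
      intro f hf h0
      have hfi : ∀ i, f i = ∑ j : Fin d, C ((f i).coeff j) * X ^ (j : ℕ) := by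
        intro i
        ext n
        rw [hcoeff (fun j => (f i).coeff j)]
        split_ifs with h
        · rfl
        · exact hf i n (by omega)
      have h1 := hli (fun x => (f x.2).coeff x.1) (by
        rw [← hex, ← (hsm f).1 h0]
        refine Finset.sum_congr rfl fun i _ => ?_
        rw [← hfi i])
      funext i
      rw [hfi i]
      refine Finset.sum_eq_zero fun j _ => ?_
      rw [h1 (j, i)]; simp
    rintro ⟨f, hf, h0⟩ ⟨f', hf', h0'⟩
    apply Subtype.ext
    exact (key f hf h0).trans (key f' hf' h0').symm

lemma span_family (T : V →ₗ[F] V) {m d : ℕ} (w : Fin m → V) :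
    (⨆ i : Fin d, (Submodule.span F (Set.range w)).map (T ^ (i : ℕ))) =
      Submodule.span F (Set.range (fun x : Fin d × Fin m => (T ^ (x.1 : ℕ)) (w x.2))) := by
  simp only [Submodule.map_span, ← Submodule.span_iUnion]
  congr 1
  ext y
  simp

lemma li_iff (T : V →ₗ[F] V) [FiniteDimensional F V] {m d : ℕ} (hd : 0 < d)
    (hdim : Module.finrank F V = m * d) (w : Fin m → V) :
    LinearIndependent F (fun x : Fin d × Fin m => (T ^ (x.1 : ℕ)) (w x.2)) ↔
      LinearIndependent F w ∧ IsSplittingSubspace T m d (Submodule.span F (Set.range w)) := by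
  have hcard : Fintype.card (Fin d × Fin m) = Module.finrank F V := by
    simp [hdim, mul_comm]
  constructor
  · intro h
    have h0 : LinearIndependent F w := by
      have := h.comp (fun i : Fin m => ((⟨0, hd⟩ : Fin d), i)) (fun a b hab => by simpa using hab)
      simpa [Function.comp_def] using this
    refine ⟨h0, ?_, ?_, ?_⟩
    · rw [finrank_span_eq_card h0, Fintype.card_fin]
    · intro i
      have := h.disjoint_span_image (s := {x | x.1 = i}) (t := {x | x.1 ≠ i})
        (Set.disjoint_left.2 fun x hx hx' => hx' hx)
      refine this.mono ?_ ?_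
      · beta_reduce
        rw [Submodule.map_span]
        apply Submodule.span_mono
        rintro _ ⟨_, ⟨a, rfl⟩, rfl⟩
        exact ⟨(i, a), rfl, rfl⟩
      · refine iSup₂_le fun j hj => ?_
        beta_reduce
        rw [Submodule.map_span]
        apply Submodule.span_mono
        rintro _ ⟨_, ⟨a, rfl⟩, rfl⟩
        exact ⟨(j, a), hj, rfl⟩
    · rw [span_family]
      exact h.span_eq_top_of_card_eq_finrank' hcard
  · rintro ⟨-, -, -, h⟩
    rw [span_family] at h
    exact linearIndependent_of_top_le_span_of_card_eq_finrank h.ge hcard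

lemma count_link [Finite F] (T : V →ₗ[F] V) [FiniteDimensional F V] {m d : ℕ} (hd : 0 < d)
    (hdim : Module.finrank F V = m * d) :
    Nat.card {w : Fin m → Module.AEval' T // kap F w d = 1} =
      splitCount T m d * Nat.card {s : Fin m → (Fin m → F) // LinearIndependent F s} := by
  have : Finite V := Module.finite_of_finite F
  have e1 : Nat.card {w : Fin m → Module.AEval' T // kap F w d = 1} =
      Nat.card {w : Fin m → V // LinearIndependent F w ∧
        IsSplittingSubspace T m d (Submodule.span F (Set.range w))} := by
    symm
    refine Nat.card_congr ((Equiv.arrowCongr (Equiv.refl (Fin m)) (Module.AEval'.of T).toEquiv).subtypeEquiv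
      fun w => ?_)
    rw [← li_iff T hd hdim, ← kap_one_iff]
    rfl
  rw [e1]
  let f : {w : Fin m → V // LinearIndependent F w ∧
        IsSplittingSubspace T m d (Submodule.span F (Set.range w))} →
        {W : Submodule F V // IsSplittingSubspace T m d W} := fun w => ⟨_, w.2.2⟩
  have : Finite (Submodule F V) := Finite.of_injective (fun W => (W : Set V)) SetLike.coe_injective
  have := Fintype.ofFinite {W : Submodule F V // IsSplittingSubspace T m d W}
  rw [← Nat.card_congr (Equiv.sigmaFiberEquiv f), Nat.card_sigma]
  have hfib : ∀ W, Nat.card {x // f x = W} =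
      Nat.card {s : Fin m → (Fin m → F) // LinearIndependent F s} := by
    rintro ⟨W, hW⟩
    have eW : W ≃ₗ[F] (Fin m → F) := LinearEquiv.ofFinrankEq _ _ (by simp [hW.1])
    have a1 : Nat.card {s : Fin m → (Fin m → F) // LinearIndependent F s} =
        Nat.card {s : Fin m → W // LinearIndependent F s} := by
      symm
      refine Nat.card_congr ((Equiv.arrowCongr (Equiv.refl (Fin m)) eW.toEquiv).subtypeEquiv
        fun s => ?_)
      exact (LinearMap.linearIndependent_iff (eW : W →ₗ[F] (Fin m → F)) eW.ker).symm
    rw [a1]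
    have hspan : ∀ s : Fin m → W, LinearIndependent F s →
        Submodule.span F (Set.range fun i => (s i : V)) = W := by
      intro s hs
      have h1 := hs.span_eq_top_of_card_eq_finrank' (by simp [hW.1])
      have h2 : (Set.range fun i => (s i : V)) = W.subtype '' (Set.range s) := by
        rw [← Set.range_comp]; rfl
      rw [h2, Submodule.span_image, h1, Submodule.map_top, Submodule.range_subtype]
    have hsub : ∀ s : Fin m → W, LinearIndependent F (fun i => (s i : V)) ↔ LinearIndependent F s :=
      fun s => LinearMap.linearIndependent_iff W.subtype W.ker_subtype
    have hmem : ∀ x : {x // f x = ⟨W, hW⟩}, ∀ i, x.1.1 i ∈ W := by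
      intro x i
      have : Submodule.span F (Set.range x.1.1) = W := congrArg Subtype.val x.2
      exact this.le (Submodule.subset_span ⟨i, rfl⟩)
    refine Nat.card_congr ⟨fun x => ⟨fun i => ⟨x.1.1 i, hmem x i⟩, (hsub _).1 x.1.2.1⟩,
      fun s => ⟨⟨fun i => (s.1 i : V), (hsub _).2 s.2, by rw [hspan s.1 s.2]; exact hW⟩,
        Subtype.ext (hspan s.1 s.2)⟩, fun x => rfl, fun s => rfl⟩
  rw [Finset.sum_congr rfl fun W _ => hfib W, Finset.sum_const, smul_eq_mul, Finset.card_univ,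
    ← Nat.card_eq_fintype_card]
  rfl

theorem split_of_equiv [Finite F] [FiniteDimensional F V] {V' : Type*} [AddCommGroup V'] [Module F V']
    [FiniteDimensional F V'] (T : V →ₗ[F] V) (T' : V' →ₗ[F] V') {m d : ℕ} (hd : 0 < d)
    (hdim : Module.finrank F V = m * d) (hdim' : Module.finrank F V' = m * d)
    (e : Module.AEval' T ≃+ Module.AEval' T')
    (H1 : ∀ (f : F[X]) v, ∃ g : F[X], e (f • v) = g • e v)
    (H2 : ∀ (f : F[X]) v', ∃ g : F[X], e.symm (f • v') = g • e.symm v') :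
    splitCount T m d = splitCount T' m d := by
  have : Finite (Module.AEval' T) := Module.finite_of_finite F
  have : Finite (Module.AEval' T') := Module.finite_of_finite F
  obtain ⟨E, hE⟩ := main_bij m e H1 H2
  have h1 := count_link T hd hdim
  have h2 := count_link T' hd hdim'
  have h3 : Nat.card {w : Fin m → Module.AEval' T // kap F w d = 1} =
      Nat.card {w : Fin m → Module.AEval' T' // kap F w d = 1} :=
    Nat.card_congr (E.subtypeEquiv fun w => by rw [hE])
  rw [h3, h2] at h1
  have : Nonempty {s : Fin m → (Fin m → F) // LinearIndependent F s} :=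
    ⟨⟨_, (Pi.basisFun F (Fin m)).linearIndependent⟩⟩
  exact (Nat.eq_of_mul_eq_mul_right Nat.card_pos h1).symm

end B6
end SplitAux

namespace SplitAux
open Polynomial

section A1
variable {F : Type*} [Field F] {V : Type*} [AddCommGroup V] [Module F[X] V]
  {V' : Type*} [AddCommGroup V'] [Module F[X] V']

lemma sub_inj (ε : V ≃+ V')
    (H2 : ∀ (f : F[X]) v', ∃ g : F[X], ε.symm (f • v') = g • ε.symm v') :
    ∃ Φ : Submodule F[X] V → Submodule F[X] V', Function.Injective Φ ∧
      ∀ N v, ε v ∈ Φ N ↔ v ∈ N := by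
  let Φ : Submodule F[X] V → Submodule F[X] V' := fun N =>
    { carrier := {v' | ε.symm v' ∈ N}
      add_mem' := fun {a b} ha hb => by
        rw [Set.mem_ofPred_eq, map_add]; exact N.add_mem ha hb
      zero_mem' := by rw [Set.mem_ofPred_eq, map_zero]; exact N.zero_mem
      smul_mem' := fun c x hx => by
        obtain ⟨g, hg⟩ := H2 c x
        rw [Set.mem_ofPred_eq, hg]; exact N.smul_mem _ hx }
  have hΦ : ∀ N v, ε v ∈ Φ N ↔ v ∈ N := by
    intro N v
    change ε.symm (ε v) ∈ N ↔ _
    rw [ε.symm_apply_apply]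
  refine ⟨Φ, fun N N' h => ?_, hΦ⟩
  ext v
  rw [← hΦ, h, hΦ]

lemma H1_of_H2 [Finite V] [Finite V'] (ε : V ≃+ V') (ε' : V' ≃+ V)
    (H2 : ∀ (f : F[X]) v', ∃ g : F[X], ε.symm (f • v') = g • ε.symm v')
    (H2' : ∀ (f : F[X]) v, ∃ g : F[X], ε'.symm (f • v) = g • ε'.symm v) :
    ∀ (f : F[X]) v, ∃ g : F[X], ε (f • v) = g • ε v := by
  obtain ⟨Φ, hi, hΦ⟩ := sub_inj ε H2
  obtain ⟨Φ', hi', -⟩ := sub_inj ε' H2'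
  have : Finite (Submodule F[X] V) := Finite.of_injective (fun W => (W : Set V)) SetLike.coe_injective
  have : Finite (Submodule F[X] V') := Finite.of_injective (fun W => (W : Set V')) SetLike.coe_injective
  have hb : Function.Bijective Φ := by
    rw [Nat.bijective_iff_injective_and_card]
    exact ⟨hi, le_antisymm (Nat.card_le_card_of_injective Φ hi) (Nat.card_le_card_of_injective Φ' hi')⟩
  intro f v
  obtain ⟨N, hN⟩ := hb.2 (Submodule.span F[X] {ε v})
  have h1 : v ∈ N := by
    rw [← hΦ, hN]; exact Submodule.mem_span_singleton_self _
  have h2 : ε (f • v) ∈ Submodule.span F[X] {ε v} := by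
    rw [← hN, hΦ]; exact N.smul_mem _ h1
  obtain ⟨g, hg⟩ := Submodule.mem_span_singleton.1 h2
  exact ⟨g, hg.symm⟩

lemma tors_self [Finite F] {p : F[X]} (hp : p.Monic) (j e : ℕ) :
    Nat.card {x : F[X] ⧸ Submodule.span F[X] {p ^ e} // p ^ j • x = 0} =
      Nat.card F ^ (p.natDegree * min j e) := by
  obtain ⟨k, hk⟩ : ∃ k, k = min j e := ⟨_, rfl⟩
  have hke : k ≤ e := by omega
  have hkj : k ≤ j := by omega
  have hmk : ∀ f : F[X], (Submodule.Quotient.mk f : F[X] ⧸ Submodule.span F[X] {p ^ e}) = 0 ↔ p ^ e ∣ f := by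
    intro f
    rw [Submodule.Quotient.mk_eq_zero]
    exact Ideal.mem_span_singleton
  have hp0 : p ≠ 0 := hp.ne_zero
  set w : F[X] ⧸ Submodule.span F[X] {p ^ e} := Submodule.Quotient.mk (p ^ (e - k)) with hw
  have h1 : ∀ g : F[X], g • w = 0 ↔ p ^ k ∣ g := by
    intro g
    rw [hw, ← Submodule.Quotient.mk_smul, hmk, smul_eq_mul]
    conv_lhs => rw [show e = k + (e - k) by omega, pow_add]
    rw [Nat.add_sub_cancel_left]
    exact mul_dvd_mul_iff_right (pow_ne_zero _ hp0)
  have h2 := card_span (hp.pow k) h1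
  rw [hp.natDegree_pow] at h2
  rw [← hk, mul_comm, ← h2]
  refine Nat.card_congr (Equiv.subtypeEquivRight fun x => ?_)
  obtain ⟨f, rfl⟩ := Submodule.Quotient.mk_surjective _ x
  rw [← Submodule.Quotient.mk_smul, hmk, smul_eq_mul, Submodule.mem_span_singleton]
  constructor
  · intro h
    have h3 : p ^ (e - k) ∣ f := by
      by_cases hje : j ≤ e
      · have hkk : k = j := by omega
        subst hkk
        have h4 : p ^ e = p ^ k * p ^ (e - k) := by rw [← pow_add]; congr 1; omega
        rw [h4] at h
        exact (mul_dvd_mul_iff_left (pow_ne_zero _ hp0)).1 h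
      · rw [show e - k = 0 by omega, pow_zero]; exact one_dvd _
    obtain ⟨g, hg⟩ := h3
    refine ⟨g, ?_⟩
    rw [hw, ← Submodule.Quotient.mk_smul, hg, smul_eq_mul, mul_comm]
  · rintro ⟨g, hg⟩
    rw [hw, ← Submodule.Quotient.mk_smul, ← sub_eq_zero, ← Submodule.Quotient.mk_sub, hmk,
      smul_eq_mul] at hg
    have h5 : p ^ e ∣ p ^ j * (g * p ^ (e - k)) := by
      rw [mul_left_comm, ← pow_add]
      exact Dvd.dvd.mul_left (pow_dvd_pow _ (by omega)) _
    have := dvd_sub h5 (Dvd.dvd.mul_left hg (p ^ j))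
    rwa [← mul_sub, sub_sub_cancel] at this

lemma tors_ne {p q : F[X]} (hp : p.Monic) (hpi : Irreducible p) (hq : q.Monic)
    (hqi : Irreducible q) (hpq : p ≠ q) (j e : ℕ) :
    Nat.card {x : F[X] ⧸ Submodule.span F[X] {p ^ e} // q ^ j • x = 0} = 1 := by
  rw [Nat.card_eq_one_iff_unique]
  have hco : IsCoprime (q ^ j) (p ^ e) := by
    apply IsCoprime.pow
    rw [hqi.coprime_iff_not_dvd]
    intro h
    exact hpq (eq_of_monic_of_associated hp hq ((hqi.associated_of_dvd hpi h).symm))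
  obtain ⟨a, b, hab⟩ := hco
  have key : ∀ x : F[X] ⧸ Submodule.span F[X] {p ^ e}, q ^ j • x = 0 → x = 0 := by
    intro x hx
    have h1 : p ^ e • x = 0 := by
      obtain ⟨f, rfl⟩ := Submodule.Quotient.mk_surjective _ x
      rw [← Submodule.Quotient.mk_smul, Submodule.Quotient.mk_eq_zero, smul_eq_mul, mul_comm]
      exact Submodule.smul_mem _ _ (Submodule.mem_span_singleton_self _)
    rw [← one_smul F[X] x, ← hab, add_smul, mul_smul, mul_smul, hx, h1]; simp
  refine ⟨⟨fun x y => Subtype.ext ((key _ x.2).trans (key _ y.2).symm)⟩, ⟨⟨0, smul_zero _⟩⟩⟩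

open DirectSum in
lemma struct_mod [Finite V] : ∃ (n : ℕ) (p : Fin n → F[X]) (e : Fin n → ℕ),
    (∀ i, (p i).Monic ∧ Irreducible (p i)) ∧ (∀ i, 0 < e i) ∧
    Nonempty (V ≃ₗ[F[X]] ((i : Fin n) → F[X] ⧸ Submodule.span F[X] {p i ^ e i})) := by
  classical
  have hT : Module.IsTorsion F[X] V := by
    intro x
    obtain ⟨p, hp, h⟩ := exists_annih (F := F) x
    exact ⟨⟨p, mem_nonZeroDivisors_of_ne_zero hp.ne_zero⟩, (h p).2 dvd_rfl⟩
  have : Module.Finite F[X] V := inferInstance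
  obtain ⟨ι, _, p, hp, e, ⟨L⟩⟩ := Module.equiv_directSum_of_isTorsion hT
  let L1 := L.trans (DirectSum.linearEquivFunOnFintype F[X] ι (fun i => F[X] ⧸ F[X] ∙ p i ^ e i))
  let J := {i : ι // 0 < e i}
  let φ : ((i : ι) → F[X] ⧸ F[X] ∙ p i ^ e i) →ₗ[F[X]] ((i : J) → F[X] ⧸ F[X] ∙ p i.1 ^ e i.1) :=
    LinearMap.pi fun i => LinearMap.proj i.1
  have hφ : Function.Bijective φ := by
    constructor
    · intro f g hfg
      funext i
      by_cases hi : 0 < e i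
      · exact congrFun hfg ⟨i, hi⟩
      · have : Subsingleton (F[X] ⧸ F[X] ∙ p i ^ e i) := by
          rw [Submodule.Quotient.subsingleton_iff, show e i = 0 by omega, pow_zero]
          exact Ideal.span_singleton_one
        exact Subsingleton.elim _ _
    · intro f
      refine ⟨fun i => if hi : 0 < e i then f ⟨i, hi⟩ else 0, ?_⟩
      funext i
      change dite _ _ _ = _
      rw [dif_pos i.2]
  let L2 := L1.trans (LinearEquiv.ofBijective φ hφ)
  let E : Fin (Fintype.card J) ≃ J := (Fintype.equivFin J).symm
  let L3 := L2.trans (LinearEquiv.piCongrLeft F[X] (fun i : J => F[X] ⧸ F[X] ∙ p i.1 ^ e i.1) E).symm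
  have hs : ∀ i, Submodule.span F[X] {p (E i).1 ^ e (E i).1} =
      Submodule.span F[X] {normalize (p (E i).1) ^ e (E i).1} := by
    intro i
    refine Ideal.span_singleton_eq_span_singleton.2 ?_
    exact (normalize_associated _).symm.pow_pow
  refine ⟨Fintype.card J, fun i => normalize (p (E i).1), fun i => e (E i).1, fun i =>
    ⟨monic_normalize (hp _).ne_zero, (normalize_associated _).symm.irreducible (hp _)⟩,
    fun i => (E i).2, ⟨L3.trans (LinearEquiv.piCongrRight fun i => Submodule.quotEquivOfEq _ _ (hs i))⟩⟩

lemma tors_count [Finite F] {n : ℕ} {p : Fin n → F[X]} {e : Fin n → ℕ}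
    (hp : ∀ i, (p i).Monic ∧ Irreducible (p i))
    (L : V ≃ₗ[F[X]] ((i : Fin n) → F[X] ⧸ Submodule.span F[X] {p i ^ e i}))
    {q : F[X]} (hq : q.Monic) (hqi : Irreducible q) (j : ℕ) [DecidableEq F[X]] :
    Nat.card {v : V // q ^ j • v = 0} =
      Nat.card F ^ (q.natDegree * ∑ i, if p i = q then min j (e i) else 0) := by
  have h1 : Nat.card {v : V // q ^ j • v = 0} =
      Nat.card ((i : Fin n) → {x : F[X] ⧸ Submodule.span F[X] {p i ^ e i} // q ^ j • x = 0}) := by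
    refine Nat.card_congr ((L.toEquiv.subtypeEquiv fun v => ?_).trans Equiv.subtypePiEquivPi)
    rw [← L.map_eq_zero_iff, map_smul, funext_iff]
    rfl
  rw [h1, Nat.card_pi, Finset.mul_sum, ← Finset.prod_pow_eq_pow_sum]
  refine Finset.prod_congr rfl fun i _ => ?_
  split_ifs with h
  · rw [← h, tors_self (hp i).1]
  · rw [tors_ne (hp i).1 (hp i).2 hq hqi h]; simp

lemma iso_of_card [Finite F] [Finite V] [Finite V']
    (h : ∀ p : F[X], p.Monic → Irreducible p → ∀ j,
      Nat.card {v : V // p ^ j • v = 0} = Nat.card {v : V' // p ^ j • v = 0}) :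
    Nonempty (V ≃ₗ[F[X]] V') := by
  classical
  have hN : 1 < Nat.card F := Finite.one_lt_card
  obtain ⟨n, p, e, hp, he, ⟨L⟩⟩ := struct_mod (F := F) (V := V)
  obtain ⟨n', p', e', hp', he', ⟨L'⟩⟩ := struct_mod (F := F) (V := V')
  have hsum : ∀ q : F[X], q.Monic → Irreducible q → ∀ j,
      (∑ i, if p i = q then min j (e i) else 0) = ∑ i, if p' i = q then min j (e' i) else 0 := by
    intro q hq hqi j
    have h1 := h q hq hqi j
    rw [tors_count hp L hq hqi, tors_count hp' L' hq hqi] at h1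
    exact Nat.eq_of_mul_eq_mul_left hqi.natDegree_pos (Nat.pow_right_injective hN h1)
  have hcnt : ∀ {n : ℕ} (p : Fin n → F[X]) (e : Fin n → ℕ) (q : F[X]) (j : ℕ), 0 < j →
      Nat.card {i // (p i, e i) = (q, j)} + (∑ i, if p i = q then min (j + 1) (e i) else 0) +
        (∑ i, if p i = q then min (j - 1) (e i) else 0) =
        2 * ∑ i, if p i = q then min j (e i) else 0 := by
    intro n p e q j hj
    rw [Nat.card_eq_fintype_card, Fintype.card_subtype, Finset.card_filter, Finset.mul_sum,
      ← Finset.sum_add_distrib, ← Finset.sum_add_distrib]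
    refine Finset.sum_congr rfl fun i _ => ?_
    by_cases h1 : p i = q
    · by_cases h2 : e i = j
      · simp [h1, h2]; omega
      · simp [h1, h2]; omega
    · simp [h1]
  obtain ⟨E, hE⟩ := fiber_equiv (fun i => (p i, e i)) (fun i => (p' i, e' i)) (by
    rintro ⟨q, j⟩
    by_cases hq : q.Monic ∧ Irreducible q ∧ 0 < j
    · obtain ⟨hq, hqi, hj⟩ := hq
      have h1 := hcnt p e q j hj
      have h2 := hcnt p' e' q j hj
      rw [hsum q hq hqi, hsum q hq hqi, hsum q hq hqi] at h1
      omega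
    · have : IsEmpty {i // (p i, e i) = (q, j)} := ⟨fun ⟨i, hi⟩ => hq (by
        have a := congrArg Prod.fst hi
        have b := congrArg Prod.snd hi
        simp only at a b
        rw [← a, ← b]; exact ⟨(hp i).1, (hp i).2, he i⟩)⟩
      have : IsEmpty {i // (p' i, e' i) = (q, j)} := ⟨fun ⟨i, hi⟩ => hq (by
        have a := congrArg Prod.fst hi
        have b := congrArg Prod.snd hi
        simp only at a b
        rw [← a, ← b]; exact ⟨(hp' i).1, (hp' i).2, he' i⟩)⟩
      rw [Nat.card_of_isEmpty, Nat.card_of_isEmpty])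
  have hpE : p = fun i => p' (E i) := funext fun i => (congrArg Prod.fst (hE i)).symm
  have heE : e = fun i => e' (E i) := funext fun i => (congrArg Prod.snd (hE i)).symm
  subst hpE heE
  exact ⟨L.trans ((LinearEquiv.piCongrLeft F[X]
    (fun i => F[X] ⧸ Submodule.span F[X] {p' i ^ e' i}) E).trans L'.symm)⟩

end A1
end SplitAux

namespace SplitAux
open Polynomial

section A2
variable {F : Type*} [Field F]

lemma crt (c r : F[X] → F[X]) (s : Finset F[X])
    (h : ∀ p ∈ s, ∀ q ∈ s, p ≠ q → IsCoprime (c p) (c q)) :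
    ∃ g, ∀ p ∈ s, c p ∣ g - r p := by
  classical
  induction s using Finset.induction_on with
  | empty => exact ⟨0, by simp⟩
  | insert a s ha ih =>
    obtain ⟨g0, hg0⟩ := ih fun p hp q hq => h p (Finset.mem_insert_of_mem hp) q (Finset.mem_insert_of_mem hq)
    have hco : IsCoprime (c a) (∏ p ∈ s, c p) := by
      apply IsCoprime.prod_right
      intro p hp
      exact h a (Finset.mem_insert_self _ _) p (Finset.mem_insert_of_mem hp)
        (by rintro rfl; exact ha hp)
    obtain ⟨u, v, huv⟩ := hco
    refine ⟨g0 * (u * c a) + r a * (v * ∏ p ∈ s, c p), ?_⟩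
    intro p hp
    rcases Finset.mem_insert.1 hp with rfl | hp
    · refine ⟨u * (g0 - r p), ?_⟩
      linear_combination (r p) * huv
    · have h1 : c p ∣ (∏ p ∈ s, c p) * (v * (r a - g0)) :=
        Dvd.dvd.mul_right (Finset.dvd_prod_of_mem _ hp) _
      have h2 := dvd_add h1 (hg0 p hp)
      convert h2 using 1
      linear_combination g0 * huv

lemma coprime_comp {a b : F[X]} (h : IsCoprime a b) (g : F[X]) : IsCoprime (a.comp g) (b.comp g) := by
  obtain ⟨u, v, huv⟩ := h
  refine ⟨u.comp g, v.comp g, ?_⟩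
  rw [← mul_comp, ← mul_comp, ← add_comp, huv, one_comp]

lemma not_dvd_both {p a b : F[X]} (hp : Irreducible p) (h : IsCoprime a b) (ha : p ∣ a) (hb : p ∣ b) :
    False := hp.not_isUnit (h.isUnit_of_dvd' ha hb)

lemma coprime_of_ne {p q : F[X]} (hp : p.Monic) (hpi : Irreducible p) (hq : q.Monic)
    (hqi : Irreducible q) (hpq : p ≠ q) : IsCoprime p q := by
  rw [hpi.coprime_iff_not_dvd]
  intro h
  exact hpq (eq_of_monic_of_associated hp hq (hpi.associated_of_dvd hqi h))

lemma exists_gp [Finite F] {p q : F[X]} (hp : p.Monic) (hpi : Irreducible p)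
    (hqi : Irreducible q) (hd : q.natDegree = p.natDegree) :
    ∃ g, p ∣ q.comp g ∧ ¬ p ^ 2 ∣ q.comp g := by
  have : Fact (Irreducible p) := ⟨hpi⟩
  have : Fact (Irreducible q) := ⟨hqi⟩
  have hfr : ∀ r : F[X], r ≠ 0 → Module.finrank F (AdjoinRoot r) = r.natDegree := by
    intro r hr
    rw [(AdjoinRoot.powerBasis hr).finrank, AdjoinRoot.powerBasis_dim]
  have : Module.Finite F (AdjoinRoot p) := (AdjoinRoot.powerBasis hpi.ne_zero).finite
  have : Finite (AdjoinRoot p) := Module.finite_of_finite F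
  obtain ⟨φ⟩ := FiniteField.nonempty_algHom_of_finrank_dvd (F := F) (K := AdjoinRoot q)
    (L := AdjoinRoot p) (by rw [hfr _ hpi.ne_zero, hfr _ hqi.ne_zero, hd])
  obtain ⟨f, hf⟩ := AdjoinRoot.mk_surjective (φ (AdjoinRoot.root q))
  have hroot : p ∣ q.comp f := by
    rw [← AdjoinRoot.mk_eq_zero]
    have h1 : aeval (AdjoinRoot.mk p f) q = 0 := by
      rw [hf, aeval_algHom_apply, AdjoinRoot.aeval_eq, AdjoinRoot.mk_self, map_zero]
    have h2 : aeval (AdjoinRoot.mk p f) q = AdjoinRoot.mk p (q.comp f) := by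
      rw [comp_eq_aeval]
      exact aeval_algHom_apply (AdjoinRoot.mkₐ p) f q
    rw [← h2, h1]
  by_cases h2 : p ^ 2 ∣ q.comp f
  · refine ⟨f + p, ?_, ?_⟩
    all_goals
      obtain ⟨k, hk⟩ := binomExpansion (q.map C) f p
      have hk' : q.comp (f + p) = q.comp f + (derivative q).comp f * p + k * p ^ 2 := by
        simpa [derivative_map, eval_map, comp] using hk
    · rw [hk']
      exact dvd_add (dvd_add hroot (dvd_mul_left _ _)) (Dvd.dvd.mul_left (dvd_pow_self _ two_ne_zero) _)
    · intro h3
      rw [hk'] at h3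
      have h4 : p ^ 2 ∣ (derivative q).comp f * p := by
        have := dvd_sub (dvd_sub h3 h2) (dvd_mul_left (p ^ 2) k)
        convert this using 1
        ring
      rw [pow_two] at h4
      have h5 := (mul_dvd_mul_iff_right hpi.ne_zero).1 h4
      exact not_dvd_both hpi (coprime_comp (PerfectField.separable_of_irreducible hqi) f) hroot h5
  · exact ⟨f, hroot, h2⟩

lemma exists_g [Finite F] (s s' : Finset F[X]) (hs : ∀ p ∈ s, p.Monic ∧ Irreducible p)
    (hs' : ∀ p ∈ s', p.Monic ∧ Irreducible p) (π : s ≃ s')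
    (hπ : ∀ p, (π p).1.natDegree = p.1.natDegree) :
    ∃ g : F[X], (∀ p : s, ∃ h, (π p).1.comp g = p.1 * h ∧ ∀ p2 ∈ s, ¬ p2 ∣ h) ∧
      ∀ q : F[X], q.Monic → Irreducible q → q ∉ s' → ∀ p ∈ s, ¬ p ∣ q.comp g := by
  classical
  choose r hr hr2 using fun p : s => exists_gp (hs p.1 p.2).1 (hs p.1 p.2).2
    (hs' _ (π p).2).2 (hπ p)
  obtain ⟨g, hg⟩ := crt (fun p => p ^ 2) (fun p => if hp : p ∈ s then r ⟨p, hp⟩ else 0) s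
    (fun p hp q hq hpq => (coprime_of_ne (hs p hp).1 (hs p hp).2 (hs q hq).1 (hs q hq).2 hpq).pow)
  have hg' : ∀ p : s, p.1 ^ 2 ∣ (π p).1.comp g - (π p).1.comp (r p) := by
    intro p
    have h1 := hg p.1 p.2
    simp only [Subtype.coe_eta, p.2, dif_pos] at h1
    refine h1.trans ?_
    have := sub_dvd_eval_sub g (r p) ((π p).1.map C)
    simpa [eval_map, comp] using this
  have hdv : ∀ p : s, p.1 ∣ (π p).1.comp g := by
    intro p
    have := dvd_add ((dvd_pow_self p.1 two_ne_zero).trans (hg' p)) (hr p)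
    simpa using this
  have hdv2 : ∀ p : s, ¬ p.1 ^ 2 ∣ (π p).1.comp g := by
    intro p h
    apply hr2 p
    have := dvd_sub h (hg' p)
    simpa using this
  refine ⟨g, fun p => ?_, ?_⟩
  · obtain ⟨h, hh⟩ := hdv p
    refine ⟨h, hh, fun p2 hp2 hd => ?_⟩
    by_cases hpp : p = ⟨p2, hp2⟩
    · subst hpp
      apply hdv2 ⟨p2, hp2⟩
      rw [hh, pow_two]
      exact mul_dvd_mul_left _ hd
    · have hne : (π p).1 ≠ (π ⟨p2, hp2⟩).1 := fun he => hpp (π.injective (Subtype.ext he))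
      refine not_dvd_both (hs p2 hp2).2 (coprime_comp (coprime_of_ne (hs' _ (π p).2).1
        (hs' _ (π p).2).2 (hs' _ (π ⟨p2, hp2⟩).2).1 (hs' _ (π ⟨p2, hp2⟩).2).2 hne) g) ?_ (hdv ⟨p2, hp2⟩)
      rw [hh]
      exact hd.mul_left _
  · intro q hq hqi hqs p hp hd
    have hne : (π ⟨p, hp⟩).1 ≠ q := fun he => hqs (he ▸ (π ⟨p, hp⟩).2)
    exact not_dvd_both (hs p hp).2 (coprime_comp (coprime_of_ne (hs' _ (π ⟨p, hp⟩).2).1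
        (hs' _ (π ⟨p, hp⟩).2).2 hq hqi hne) g) (hdv ⟨p, hp⟩) hd

lemma inj_of_not_dvd {M : Type*} [AddCommGroup M] [Module F[X] M] [Finite M] (s : Finset F[X])
    (hinj : ∀ p : F[X], p.Monic → Irreducible p → p ∉ s → ∀ v : M, p • v = 0 → v = 0)
    (f : F[X]) (hf : ∀ p ∈ s, ¬ p ∣ f) (v : M) (hv : f • v = 0) : v = 0 := by
  classical
  have main : ∀ f : F[X], f ≠ 0 → (∀ p ∈ s, ¬ p ∣ f) → ∀ v : M, f • v = 0 → v = 0 := by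
    intro f
    induction f using UniqueFactorizationMonoid.induction_on_prime with
    | h₁ => intro h; exact absurd rfl h
    | h₂ x hx =>
      intro _ _ v hv
      obtain ⟨u, rfl⟩ := hx
      have : (↑u⁻¹ : F[X]) • (u : F[X]) • v = 0 := by rw [hv, smul_zero]
      rwa [← mul_smul, Units.inv_mul, one_smul] at this
    | h₃ a q ha hq ih =>
      intro _ hnd v hv
      apply ih ha (fun p hp hd => hnd p hp (hd.mul_left _))
      have hn : normalize q ∣ q := (normalize_associated q).dvd
      apply hinj (normalize q) (monic_normalize hq.ne_zero)
        ((normalize_associated q).symm.irreducible hq.irreducible)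
        (fun hm => hnd _ hm (hn.mul_right _))
      obtain ⟨c, hc⟩ := (normalize_associated q).symm.dvd
      rw [hc, mul_comm q c, mul_smul, ← mul_smul q a, hv, smul_zero]
  by_cases h0 : f = 0
  · obtain ⟨p, hp, hpv⟩ := exists_annih (F := F) v
    refine main p hp.ne_zero (fun p hp => ?_) v ((hpv p).2 dvd_rfl)
    exact absurd (h0 ▸ dvd_zero p) (hf p hp)
  · exact main f h0 hf v hv

lemma bij_of_map {A B : Type*} (s : Finset A) (s' : Finset A) (k k' : A → B)
    (h : s.val.map k = s'.val.map k') : ∃ π : s ≃ s', ∀ p, k' (π p).1 = k p.1 := by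
  classical
  refine fiber_equiv (fun p : s => k p.1) (fun p : s' => k' p.1) fun c => ?_
  have key : ∀ (s : Finset A) (k : A → B), Nat.card {a : s // k a.1 = c} = (s.val.map k).count c := by
    intro s k
    rw [Multiset.count_map]
    have : Nat.card {a : s // k a.1 = c} = Nat.card {a : A // a ∈ s.filter fun a => c = k a} := by
      refine Nat.card_congr ⟨fun a => ⟨a.1.1, ?_⟩, fun a => ⟨⟨a.1, ?_⟩, ?_⟩, fun a => rfl, fun a => rfl⟩
      · exact Finset.mem_filter.2 ⟨a.1.2, a.2.symm⟩
      · exact (Finset.mem_filter.1 a.2).1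
      · exact (Finset.mem_filter.1 a.2).2.symm
    rw [this, Nat.card_eq_fintype_card, Fintype.card_coe]
    rfl
  rw [key, key, h]

theorem exists_eps [Finite F] {V V' : Type*} [AddCommGroup V] [Module F V] [FiniteDimensional F V]
    [AddCommGroup V'] [Module F V'] [FiniteDimensional F V'] (T : V →ₗ[F] V) (T' : V' →ₗ[F] V')
    (τ : Multiset (ℕ × Multiset ℕ)) (h : HasType τ T) (h' : HasType τ T') :
    ∃ ε : Module.AEval' T ≃+ Module.AEval' T',
      ∀ (f : F[X]) v', ∃ g : F[X], ε.symm (f • v') = g • ε.symm v' := by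
  have : Finite V := Module.finite_of_finite F
  have : Finite V' := Module.finite_of_finite F
  obtain ⟨s, l, hs, -, hτ, hk, hi⟩ := h
  obtain ⟨s', l', hs', -, hτ', hk', hi'⟩ := h'
  obtain ⟨π, hπ⟩ := bij_of_map s s' (fun p => (p.natDegree, l p)) (fun p => (p.natDegree, l' p))
    (hτ.symm.trans hτ')
  obtain ⟨g, hg1, hg2⟩ := exists_g s s' hs hs' π fun p => congrArg Prod.fst (hπ p)
  have hinj : ∀ p : F[X], p.Monic → Irreducible p → p ∉ s → ∀ v : Module.AEval' T, p • v = 0 → v = 0 := by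
    intro p hp hpi hps v hv
    have h1 := hi p hp hpi hps
    rw [LinearMap.ker_eq_bot'] at h1
    exact h1 v hv
  have hinj' : ∀ p : F[X], p.Monic → Irreducible p → p ∉ s' → ∀ v : Module.AEval' T', p • v = 0 → v = 0 := by
    intro p hp hpi hps v hv
    have h1 := hi' p hp hpi hps
    rw [LinearMap.ker_eq_bot'] at h1
    exact h1 v hv
  have : Finite (Module.AEval' T) := Module.finite_of_finite F
  have : Finite (Module.AEval' T') := Module.finite_of_finite F
  let S : V →ₗ[F] V := aeval T g
  have : Finite (Module.AEval' S) := Module.finite_of_finite F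
  have hS : ∀ f : F[X], aeval S f = aeval T (f.comp g) := fun f => (aeval_comp T).symm
  have hcS : ∀ f : F[X], Nat.card {v : Module.AEval' S // f • v = 0} =
      Nat.card {v : Module.AEval' T // f.comp g • v = 0} := by
    intro f
    refine Nat.card_congr (((Module.AEval'.of S).symm.trans (Module.AEval'.of T)).toEquiv.subtypeEquiv
      fun v => ?_)
    change aeval S f _ = 0 ↔ aeval T (f.comp g) _ = 0
    rw [hS]
    rfl
  have hone : ∀ {M : Type _} [AddCommGroup M] [Module F[X] M] (f : F[X]),
      (∀ v : M, f • v = 0 → v = 0) → Nat.card {v : M // f • v = 0} = 1 := by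
    intro M _ _ f hf
    rw [Nat.card_eq_one_iff_unique]
    exact ⟨⟨fun x y => Subtype.ext ((hf _ x.2).trans (hf _ y.2).symm)⟩, ⟨⟨0, smul_zero _⟩⟩⟩
  have hone' : ∀ {M : Type _} [AddCommGroup M] [Module F[X] M] (f : F[X]),
      (∀ v : M, f • v = 0 → v = 0) → Nat.card {v : M // f • v = 0} = 1 := by
    intro M _ _ f hf
    rw [Nat.card_eq_one_iff_unique]
    exact ⟨⟨fun x y => Subtype.ext ((hf _ x.2).trans (hf _ y.2).symm)⟩, ⟨⟨0, smul_zero _⟩⟩⟩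
  obtain ⟨φ⟩ := iso_of_card (F := F) (V := Module.AEval' S) (V' := Module.AEval' T') (by
    intro q hq hqi j
    rw [hcS, pow_comp]
    by_cases hqs : q ∈ s'
    · obtain ⟨p, hp⟩ := π.surjective ⟨q, hqs⟩
      have hpq : (π p).1 = q := congrArg Subtype.val hp
      obtain ⟨h, hh, hnd⟩ := hg1 p
      rw [hpq] at hh
      have e1 : Nat.card {v : Module.AEval' T // q.comp g ^ j • v = 0} =
          Nat.card (LinearMap.ker (aeval T (p.1 ^ j))) := by
        refine Nat.card_congr ((Module.AEval'.of T).symm.toEquiv.subtypeEquiv fun v => ?_)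
        change _ ↔ p.1 ^ j • v = 0
        rw [hh, mul_pow, mul_comm, mul_smul]
        constructor
        · intro hv
          exact inj_of_not_dvd s hinj (h ^ j) (fun p2 hp2 hd =>
            hnd p2 hp2 ((hs p2 hp2).2.prime.dvd_of_dvd_pow hd)) _ hv
        · intro hv
          rw [hv, smul_zero]
      have e2 : Nat.card {v : Module.AEval' T' // q ^ j • v = 0} =
          Nat.card (LinearMap.ker (aeval T' (q ^ j))) :=
        Nat.card_congr ((Module.AEval'.of T').symm.toEquiv.subtypeEquiv fun v => Iff.rfl)
      have hpl := hπ p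
      rw [hpq] at hpl
      have hpl1 : q.natDegree = p.1.natDegree := congrArg Prod.fst hpl
      have hpl2 : l' q = l p.1 := congrArg Prod.snd hpl
      rw [e1, e2, Module.natCard_eq_pow_finrank (K := F) (V := LinearMap.ker (aeval T (p.1 ^ j))),
        Module.natCard_eq_pow_finrank (K := F) (V := LinearMap.ker (aeval T' (q ^ j))), hk p.1 p.2, hk' q hqs, hpl1, hpl2]
    · rw [hone (M := Module.AEval' T), hone' (M := Module.AEval' T')]
      · intro v hv
        exact inj_of_not_dvd s' hinj' (q ^ j) (fun p hp hd => hqs (by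
          have h1 := (hs' p hp).2.prime.dvd_of_dvd_pow hd
          rwa [← eq_of_monic_of_associated (hs' p hp).1 hq
            ((hs' p hp).2.associated_of_dvd hqi h1)])) v hv
      · intro v hv
        exact inj_of_not_dvd s hinj (q.comp g ^ j) (fun p hp hd =>
          hg2 q hq hqi hqs p hp ((hs p hp).2.prime.dvd_of_dvd_pow hd)) v hv)
  refine ⟨((Module.AEval'.of T).symm.trans (Module.AEval'.of S)).toAddEquiv.trans φ.toAddEquiv, ?_⟩
  intro f v'
  refine ⟨f.comp g, ?_⟩
  change Module.AEval'.of T ((Module.AEval'.of S).symm (φ.symm (f • v'))) =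
    f.comp g • Module.AEval'.of T ((Module.AEval'.of S).symm (φ.symm v'))
  rw [map_smul]
  change Module.AEval'.of T (aeval S f ((Module.AEval'.of S).symm (φ.symm v'))) = _
  rw [hS]
  rfl

end A2
end SplitAux

/-- operators of the same similarity class type on `md`-dimensional
spaces have the same number of `m`-dimensional splitting subspaces. -/
theorem splitCount_eq_of_same_type (F V V' : Type*) [Field F] [Fintype F]
    [AddCommGroup V] [Module F V] [FiniteDimensional F V]
    [AddCommGroup V'] [Module F V'] [FiniteDimensional F V']
    (m d : ℕ) (hm : 0 < m) (hd : 0 < d)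
    (hdim : Module.finrank F V = m * d) (hdim' : Module.finrank F V' = m * d)
    (T : V →ₗ[F] V) (T' : V' →ₗ[F] V')
    (h : ∃ τ : Multiset (ℕ × Multiset ℕ), HasType τ T ∧ HasType τ T') :
    splitCount T m d = splitCount T' m d := by
  obtain ⟨τ, h1, h2⟩ := h
  obtain ⟨ε, H2⟩ := SplitAux.exists_eps T T' τ h1 h2
  obtain ⟨ε', H2'⟩ := SplitAux.exists_eps T' T τ h2 h1
  have : Finite (Module.AEval' T) := Module.finite_of_finite F
  have : Finite (Module.AEval' T') := Module.finite_of_finite F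
  exact SplitAux.split_of_equiv T T' hd hdim hdim' ε (SplitAux.H1_of_H2 ε ε' H2 H2') H2
end

section
/- Let T be a linear operator on an md-dimensional vector space V over F_q, let c ∈ F_q, and let I denote the identity operator on V. Then σ(m,d;T) = σ(m,d;T + cI). -/
theorem map_pow_le_aux {F V : Type*} [Field F] [AddCommGroup V] [Module F V]
    (T : V →ₗ[F] V) (c : F) (d : ℕ) (W : Submodule F V) :
    (⨆ i : Fin d, W.map ((T + c • (LinearMap.id : V →ₗ[F] V)) ^ (i : ℕ))) ≤
      ⨆ i : Fin d, W.map (T ^ (i : ℕ)) := by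
  refine iSup_le fun i => ?_
  rintro _ ⟨w, hw, rfl⟩
  have hc : Commute T (c • (LinearMap.id : V →ₗ[F] V)) :=
    Commute.smul_right (Commute.one_right T) c
  rw [hc.add_pow, LinearMap.sum_apply]
  refine Submodule.sum_mem _ fun j hj => ?_
  have hj' : j < d := by
    have := i.2
    have := Finset.mem_range.1 hj
    omega
  have h1 : (c • (LinearMap.id : V →ₗ[F] V)) ^ ((i : ℕ) - j) = (c ^ ((i : ℕ) - j)) • 1 := by
    rw [smul_pow]
    congr 1
    exact one_pow _
  rw [h1]
  refine Submodule.mem_iSup_of_mem (⟨j, hj'⟩ : Fin d) ?_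
  refine ⟨c ^ ((i : ℕ) - j) • (((i : ℕ).choose j) • w), ?_, ?_⟩
  · exact W.smul_mem _ (W.nsmul_mem hw _)
  · simp [Module.End.natCast_apply]

theorem finrank_finset_sup_aux {F V ι : Type*} [Field F] [AddCommGroup V] [Module F V]
    [FiniteDimensional F V] (p : ι → Submodule F V) (m : ℕ)
    (hp : ∀ i, Module.finrank F (p i) ≤ m) (s : Finset ι) :
    Module.finrank F (s.sup p : Submodule F V) ≤ s.card * m := by
  classical
  induction s using Finset.induction_on with
  | empty => simp
  | insert a s ha ih =>
    rw [Finset.sup_insert, Finset.card_insert_of_notMem ha]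
    have := Submodule.finrank_add_le_finrank_add_finrank (p a) (s.sup p)
    have := hp a
    rw [Nat.succ_mul]
    omega

theorem indep_aux {F V : Type*} [Field F] [AddCommGroup V] [Module F V]
    [FiniteDimensional F V] (m d : ℕ) (hdim : Module.finrank F V = m * d)
    (p : Fin d → Submodule F V) (hp : ∀ i, Module.finrank F (p i) ≤ m)
    (ht : (⨆ i, p i) = ⊤) : iSupIndep p := by
  intro i
  have h1 : (⨆ j, ⨆ (_ : j ≠ i), p j) = (Finset.univ.erase i).sup p := by
    rw [Finset.sup_eq_iSup]
    simp
  rw [h1]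
  have h2 := finrank_finset_sup_aux p m hp (Finset.univ.erase i)
  have h3 : p i ⊔ (Finset.univ.erase i).sup p = ⊤ := by
    rw [← Finset.sup_insert, Finset.insert_erase (Finset.mem_univ i), Finset.sup_univ_eq_iSup, ht]
  have h4 := Submodule.finrank_sup_add_finrank_inf_eq (p i) ((Finset.univ.erase i).sup p)
  rw [h3, finrank_top, hdim] at h4
  have h5 := hp i
  have h6 : (Finset.univ.erase i).card + 1 = d := by
    rw [Finset.card_erase_add_one (Finset.mem_univ i)]; simp
  have h7 : m * d = (Finset.univ.erase i).card * m + m := by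
    rw [← Nat.succ_mul, Nat.succ_eq_add_one, h6, mul_comm]
  rw [disjoint_iff]
  apply Submodule.finrank_eq_zero.1
  omega

theorem split_aux {F V : Type*} [Field F] [AddCommGroup V] [Module F V]
    [FiniteDimensional F V] (m d : ℕ) (hdim : Module.finrank F V = m * d)
    (T : V →ₗ[F] V) (c : F) (W : Submodule F V)
    (h : IsSplittingSubspace (T + c • (LinearMap.id : V →ₗ[F] V)) m d W) :
    IsSplittingSubspace T m d W := by
  obtain ⟨h1, -, h3⟩ := h
  have ht : (⨆ i : Fin d, W.map (T ^ (i : ℕ))) = ⊤ :=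
    top_le_iff.1 (h3 ▸ map_pow_le_aux T c d W)
  exact ⟨h1, indep_aux m d hdim _ (fun i => (Submodule.finrank_map_le _ _).trans h1.le) ht, ht⟩

/-- `σ(m,d;T) = σ(m,d;T + cI)`. -/
theorem splitCount_add_smul_id (F V : Type*) [Field F] [Fintype F]
    [AddCommGroup V] [Module F V] [FiniteDimensional F V]
    (m d : ℕ) (hm : 0 < m) (hd : 0 < d) (hdim : Module.finrank F V = m * d)
    (T : V →ₗ[F] V) (c : F) :
    splitCount T m d = splitCount (T + c • (LinearMap.id : V →ₗ[F] V)) m d := by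
  unfold splitCount
  congr 1
  ext W
  refine ⟨fun h => ?_, fun h => split_aux m d hdim T c W h⟩
  refine split_aux m d hdim _ (-c) W ?_
  have : T + c • (LinearMap.id : V →ₗ[F] V) + (-c) • (LinearMap.id : V →ₗ[F] V) = T := by
    rw [neg_smul]; abel
  rw [this]
  exact h
end

section
/- For nonnegative integers a ≥ d ≥ b ≥ c and any q, the identity Σ_s [a−b choose b−s]_q [b−c choose s−c]_q [a−2b+s choose d−2b+s]_q q^{(b−s)^2} = [a−b choose d−b]_q [d−c choose b−c]_q holds, where the sum is over all integers s (only finitely many terms are nonzero). -/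
theorem gN_zero (q n : ℕ) : gaussNat q n 0 = 1 := by cases n <;> rfl

theorem gN_succ (q n k : ℕ) : gaussNat q (n+1) (k+1) =
    gaussNat q n k + q ^ (k + 1) * gaussNat q n (k + 1) := rfl

theorem gN_lt (q n : ℕ) : ∀ k, n < k → gaussNat q n k = 0 := by
  induction n with
  | zero => intro k hk; obtain ⟨k, rfl⟩ : ∃ l, k = l + 1 := ⟨k - 1, by omega⟩; rfl
  | succ n ih =>
    intro k hk
    obtain ⟨k, rfl⟩ : ∃ l, k = l + 1 := ⟨k - 1, by omega⟩
    rw [gN_succ, ih k (by omega), ih (k+1) (by omega)]; simp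

theorem gN_self (q n : ℕ) : gaussNat q n n = 1 := by
  induction n with
  | zero => rfl
  | succ n ih => rw [gN_succ, ih, gN_lt q n (n+1) (by omega)]; simp

def qInt (q n : ℕ) : ℕ := ∑ t ∈ Finset.range n, q ^ t

def qFac (q : ℕ) : ℕ → ℕ
  | 0 => 1
  | n + 1 => qInt q (n+1) * qFac q n

theorem qFac_succ (q n : ℕ) : qFac q (n+1) = qInt q (n+1) * qFac q n := rfl

theorem qInt_add (q a b : ℕ) : qInt q (a + b) = qInt q a + q ^ a * qInt q b := by
  unfold qInt
  rw [Finset.sum_range_add, Finset.mul_sum]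
  simp [pow_add]

theorem qFac_pos (q n : ℕ) : 0 < qFac q n := by
  induction n with
  | zero => simp [qFac]
  | succ n ih =>
    rw [qFac_succ]
    refine Nat.mul_pos ?_ ih
    unfold qInt
    rw [Finset.sum_range_succ']
    simp

theorem gN_fac (q : ℕ) : ∀ N a b, a + b = N →
    gaussNat q (a + b) a * (qFac q a * qFac q b) = qFac q (a + b) := by
  intro N
  induction N with
  | zero =>
    intro a b h
    obtain ⟨rfl, rfl⟩ : a = 0 ∧ b = 0 := by omega
    simp [qFac, gN_zero]
  | succ N ih =>
    intro a b h
    rcases a with _ | a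
    · simp [qFac, gN_zero]
    rcases b with _ | b
    · simp [qFac, gN_self]
    have h1 := ih a (b+1) (by omega)
    have h2 := ih (a+1) b (by omega)
    have e1 : a + 1 + (b + 1) = (a + b + 1) + 1 := by ring
    have e2 : a + 1 + b = a + b + 1 := by ring
    have e3 : a + (b + 1) = a + b + 1 := by ring
    have h3 := qInt_add q (a+1) (b+1)
    rw [e1] at h3 ⊢
    rw [e2] at h2
    rw [e3] at h1
    rw [gN_succ, qFac_succ q (a+b+1), h3, add_mul, add_mul]
    congr 1
    · rw [← h1, qFac_succ q a]; ring
    · rw [← h2, qFac_succ q b]; ring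

theorem gN_tri (q j x y : ℕ) :
    gaussNat q (j + x + y) j * gaussNat q (x + y) x =
      gaussNat q (j + x + y) (j + x) * gaussNat q (j + x) j := by
  have h1 := gN_fac q _ j (x+y) rfl
  have h2 := gN_fac q _ x y rfl
  have h3 := gN_fac q _ (j+x) y rfl
  have h4 := gN_fac q _ j x rfl
  rw [← add_assoc] at h1
  have hp : 0 < qFac q j * qFac q x * qFac q y :=
    Nat.mul_pos (Nat.mul_pos (qFac_pos q j) (qFac_pos q x)) (qFac_pos q y)
  apply Nat.eq_of_mul_eq_mul_right hp
  trans qFac q (j + x + y)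
  · rw [← h1, ← h2]; ring
  · rw [← h3, ← h4]; ring

theorem gN_vand (q m n : ℕ) : ∀ k, gaussNat q (m + n) k =
    ∑ p ∈ Finset.HasAntidiagonal.antidiagonal k,
      gaussNat q m p.1 * gaussNat q n p.2 * q ^ (p.2 * (m - p.1)) := by
  induction m with
  | zero =>
    intro k
    rcases k with _ | k
    · simp [gN_zero]
    · rw [Finset.Nat.sum_antidiagonal_succ]
      simp [gN_zero, gN_lt]
  | succ m ih =>
    intro k
    rcases k with _ | k
    · simp [gN_zero]
    · rw [show m + 1 + n = m + n + 1 by ring, gN_succ, ih k, ih (k+1),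
        Finset.Nat.sum_antidiagonal_succ, Finset.Nat.sum_antidiagonal_succ, mul_add,
        Finset.mul_sum, add_left_comm, ← Finset.sum_add_distrib]
      congr 1
      · simp only [gN_zero, Nat.sub_zero]; ring
      · apply Finset.sum_congr rfl
        rintro ⟨i, j⟩ hp
        have hk : i + j = k := by simpa using hp
        subst hk
        simp only [Nat.add_sub_add_right]
        rw [gN_succ q m i]
        by_cases h : i + 1 ≤ m
        · obtain ⟨r, rfl⟩ := Nat.exists_eq_add_of_le h
          rw [show i + 1 + r - i = r + 1 by omega, show i + 1 + r - (i + 1) = r by omega]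
          ring
        · rw [gN_lt q m (i+1) (by omega)]; simp

theorem gZ_cast (q n k : ℕ) : gaussZ q (n : ℤ) (k : ℤ) = gaussNat q n k := by
  unfold gaussZ
  split_ifs with h
  · simp
  · rw [gN_lt]; omega

/-- for `a ≥ d ≥ b ≥ c`,
`Σ_s [a−b, b−s]_q [b−c, s−c]_q [a−2b+s, d−2b+s]_q q^{(b−s)²} = [a−b, d−b]_q [d−c, b−c]_q`,
the sum being over all integers `s` (only finitely many terms are nonzero). -/
theorem gauss_identity_first (q : ℕ) (a b c d : ℕ)
    (hdc : c ≤ b) (hbd : b ≤ d) (hda : d ≤ a) :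
    (∑ᶠ s : ℤ, gaussZ q ((a : ℤ) - b) ((b : ℤ) - s) * gaussZ q ((b : ℤ) - c) (s - c) *
        gaussZ q ((a : ℤ) - 2 * b + s) ((d : ℤ) - 2 * b + s) *
        q ^ (((b : ℤ) - s).natAbs ^ 2)) =
      gaussZ q ((a : ℤ) - b) ((d : ℤ) - b) * gaussZ q ((d : ℤ) - c) ((b : ℤ) - c) := by
  obtain ⟨m, rfl⟩ := Nat.exists_eq_add_of_le hdc
  obtain ⟨e, rfl⟩ := Nat.exists_eq_add_of_le hbd
  obtain ⟨y, rfl⟩ := Nat.exists_eq_add_of_le hda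
  rw [← finsum_comp_equiv (Equiv.subLeft ((c + m : ℕ) : ℤ))]
  rw [finsum_eq_sum_of_support_subset (s := (Finset.range (m+1)).map Nat.castEmbedding)]
  · rw [Finset.sum_map]
    have r1 : ((c + m + e + y : ℕ) : ℤ) - (c + m : ℕ) = ((e + y : ℕ) : ℤ) := by push_cast; ring
    have r2 : ((c + m + e : ℕ) : ℤ) - (c + m : ℕ) = ((e : ℕ) : ℤ) := by push_cast; ring
    have r3 : ((c + m + e : ℕ) : ℤ) - (c : ℕ) = ((m + e : ℕ) : ℤ) := by push_cast; ring
    have r4 : ((c + m : ℕ) : ℤ) - (c : ℕ) = ((m : ℕ) : ℤ) := by push_cast; ring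
    rw [r1, r2, r3, r4, gZ_cast, gZ_cast, gN_vand q m e m,
      Finset.Nat.sum_antidiagonal_eq_sum_range_succ_mk, ← Finset.sum_range_reflect,
      Finset.mul_sum]
    apply Finset.sum_congr rfl
    intro r hr
    have hr : r ≤ m := by simpa [Nat.lt_succ_iff] using hr
    obtain ⟨j, rfl⟩ := Nat.exists_eq_add_of_le' hr
    have t2 : j + r + 1 - 1 - r = j := by omega
    have t3 : j + r - r = j := by omega
    rw [t2, t3]
    simp only [Nat.castEmbedding_apply, Equiv.subLeft_apply, sub_sub_cancel, Int.natAbs_natCast]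
    have t1 : ((c + (j + r) : ℕ) : ℤ) - (j : ℕ) - c = (r : ℕ) := by push_cast; ring
    rw [t1, gZ_cast, gZ_cast]
    by_cases h : j ≤ e
    · obtain ⟨x, rfl⟩ := Nat.exists_eq_add_of_le h
      have t4 : ((c + (j + r) + (j + x) + y : ℕ) : ℤ) - 2 * (c + (j + r) : ℕ) +
          ((c + (j + r) : ℕ) - (j : ℕ)) = ((x + y : ℕ) : ℤ) := by push_cast; ring
      have t5 : ((c + (j + r) + (j + x) : ℕ) : ℤ) - 2 * (c + (j + r) : ℕ) +
          ((c + (j + r) : ℕ) - (j : ℕ)) = ((x : ℕ) : ℤ) := by push_cast; ring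
      rw [t4, t5, gZ_cast]
      have := gN_tri q j x y
      rw [sq]
      calc _ = (gaussNat q (j + x + y) j * gaussNat q (x + y) x) *
              gaussNat q (j + r) r * q ^ (j * j) := by ring
        _ = _ := by rw [this]; ring
    · rw [gN_lt q e j (by omega)]
      have : gaussZ q (((c + (j + r) + e + y : ℕ) : ℤ) - 2 * (c + (j + r) : ℕ) +
          ((c + (j + r) : ℕ) - (j : ℕ))) (((c + (j + r) + e : ℕ) : ℤ) - 2 * (c + (j + r) : ℕ) +
          ((c + (j + r) : ℕ) - (j : ℕ))) = 0 := by
        unfold gaussZ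
        rw [if_neg]
        push_cast
        omega
      rw [this]; simp
  · intro t ht
    simp only [Function.mem_support, Equiv.subLeft_apply, sub_sub_cancel] at ht
    have h1 : 0 ≤ t := by
      by_contra hh
      apply ht
      have : gaussZ q (((c + m + e + y : ℕ) : ℤ) - (c + m : ℕ)) t = 0 := by
        unfold gaussZ
        rw [if_neg]
        omega
      rw [this]; simp
    have h2 : t ≤ m := by
      by_contra hh
      apply ht
      have : gaussZ q (((c + m : ℕ) : ℤ) - (c : ℕ)) (((c + m : ℕ) : ℤ) - t - c) = 0 := by
        unfold gaussZ
        rw [if_neg]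
        push_cast
        omega
      rw [this]; simp
    simp only [Finset.coe_map, Set.mem_image, Finset.mem_coe, Finset.mem_range]
    exact ⟨t.toNat, by omega, by simp [h1]⟩
end
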